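/- arXiv:2209.12312 — 2 statements merged into one kernel-verified Lean document; each statement's English description precedes it below -/
import Mathlib

section
/- Let σ ⊂ ℝ² be a smooth simple closed curve, Ω₋ the bounded simply connected domain it encloses, Ω₊ := ℝ² ∖ (σ ∪ closure(Ω₋)), 𝒮 := σ × ℝ ⊂ ℝ³, and 𝒮± := Ω± × ℝ. Suppose v₋ : Ω₋ → ℝ² and v₊ : Ω₊ → ℝ² are bounded vector fields, C¹ up to σ, and q : ℝ³ → ℝ is a harmonic homogeneous quadratic polynomial, such that: (b) the fields u± := (v±, 0) + ∇q on 𝒮± are divergence-free, curl-free, and tangent to 𝒮; (c) for every point p ∈ 𝒮, the vector u₊(p) − u₋(p) lies in the kernel of the matrix Du₊(p) + Du₋(p). Then v₊ ≡ 0, v₋ ≡ 0, and q ≡ 0. -/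
noncomputable section

open MeasureTheory Filter Set
open scoped RealInnerProductSpace Topology

abbrev E3 : Type := EuclideanSpace ℝ (Fin 3)
abbrev E2 : Type := EuclideanSpace ℝ (Fin 2)

def mk3 (a b c : ℝ) : E3 := (EuclideanSpace.equiv (Fin 3) ℝ).symm ![a, b, c]

def e3 (i : Fin 3) : E3 := EuclideanSpace.single i 1

/-- `∂_j v_i` at `p`. -/
def pder (v : E3 → E3) (i j : Fin 3) (p : E3) : ℝ := fderiv ℝ v p (e3 j) i

def div3 (v : E3 → E3) (p : E3) : ℝ := ∑ i, pder v i i p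

def curl3 (v : E3 → E3) (p : E3) : E3 :=
  mk3 (pder v 2 1 p - pder v 1 2 p) (pder v 0 2 p - pder v 2 0 p)
    (pder v 1 0 p - pder v 0 1 p)

def lap3 (f : E3 → ℝ) (p : E3) : ℝ :=
  ∑ j, fderiv ℝ (fun x => fderiv ℝ f x (e3 j)) p (e3 j)

def IsTangentAt (S : Set E3) (p v : E3) : Prop :=
  ∃ γ : ℝ → E3, (∀ t, γ t ∈ S) ∧ γ 0 = p ∧ HasDerivAt γ v 0

def IsSurface (k : ℕ∞) (S : Set E3) : Prop :=
  ∀ p ∈ S, ∃ (f : E2 → E3) (U : Set E2) (V : Set E3),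
    IsOpen U ∧ IsOpen V ∧ p ∈ V ∧ ContDiffOn ℝ k f U ∧ Set.InjOn f U ∧
    f '' U = S ∩ V ∧ ∀ x ∈ U, Function.Injective (fderiv ℝ f x)

structure CVSBase (S Ωm Ωp : Set E3) (vm vp : E3 → E3) : Prop where
  openm : IsOpen Ωm
  openp : IsOpen Ωp
  disj : Disjoint Ωm Ωp
  disjm : Disjoint Ωm S
  disjp : Disjoint Ωp S
  clm : S ⊆ closure Ωm
  clp : S ⊆ closure Ωp
  smoothm : ∃ W, IsOpen W ∧ Ωm ∪ S ⊆ W ∧ ContDiffOn ℝ 1 vm W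
  smoothp : ∃ W, IsOpen W ∧ Ωp ∪ S ⊆ W ∧ ContDiffOn ℝ 1 vp W
  divm : ∀ p ∈ Ωm, div3 vm p = 0
  divp : ∀ p ∈ Ωp, div3 vp p = 0
  curlm : ∀ p ∈ Ωm, curl3 vm p = 0
  curlp : ∀ p ∈ Ωp, curl3 vp p = 0
  tangentm : ∀ p ∈ S, IsTangentAt S p (vm p)
  tangentp : ∀ p ∈ S, IsTangentAt S p (vp p)

structure CVSPair (S Ωm Ωp : Set E3) (vm vp : E3 → E3)
    extends CVSBase S Ωm Ωp vm vp : Prop where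
  strain : ∀ p ∈ S, (fderiv ℝ vp p + fderiv ℝ vm p) (vp p - vm p) = 0
  bernoulli : ∀ p ∈ S, ∀ᶠ q in 𝓝[S] p,
    ‖vp q‖ ^ 2 - ‖vm q‖ ^ 2 = ‖vp p‖ ^ 2 - ‖vm p‖ ^ 2

/-- the open region `Ωm` is the bounded region enclosed by the closed surface `S`,
and `Ωp` is its exterior. -/
structure EnclosedBy (S Ωm Ωp : Set E3) : Prop where
  openm : IsOpen Ωm
  bounded : Bornology.IsBounded Ωm
  fr : frontier Ωm = S
  plus : Ωp = (Ωm ∪ S)ᶜ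

/-- gradient of a scalar function on ℝ³. -/
def grad3 (f : E3 → ℝ) (p : E3) : E3 :=
  (EuclideanSpace.equiv (Fin 3) ℝ).symm (fun i => fderiv ℝ f p (e3 i))


/-- Gluing local primitives on a simply connected space. -/
theorem glue_primitives {X : Type*} [TopologicalSpace X] [SimplyConnectedSpace X]
    [LocallyPathConnectedSpace X] (U : X → Set X) (hU : ∀ x, IsOpen (U x)) (hxU : ∀ x, x ∈ U x)
    (Φ : X → X → ℝ)
    (hc : ∀ x, ∀ y ∈ U x, ∀ᶠ z in 𝓝 y, Φ y z - Φ y y = Φ x z - Φ x y) :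
    ∃ φ : X → ℝ, ∀ x, ∀ᶠ z in 𝓝 x, φ z - φ x = Φ x z - Φ x x := by
  let n : X × ℝ → Filter (X × ℝ) := fun a => map (fun y => (y, a.2 + (Φ a.1 y - Φ a.1 a.1))) (𝓝 a.1)
  let E : Type _ := X × ℝ
  let tE : TopologicalSpace E := TopologicalSpace.mkOfNhds n
  have hn : ∀ a : E, 𝓝 a = n a := by
    intro a
    refine TopologicalSpace.nhds_mkOfNhds n a ?_ ?_
    · intro b
      refine fun s hs => ?_
      have := mem_of_mem_nhds (mem_map.1 hs)
      simpa using this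
    · rintro ⟨x, s⟩ A hA
      have hA' : ∀ᶠ y in 𝓝 x, (y, s + (Φ x y - Φ x x)) ∈ A := hA
      change ∀ᶠ y in 𝓝 x, A ∈ n (y, s + (Φ x y - Φ x x))
      filter_upwards [hA'.eventually_nhds, (hU x).mem_nhds (hxU x)] with y hy hyU
      change ∀ᶠ z in 𝓝 y, (z, s + (Φ x y - Φ x x) + (Φ y z - Φ y y)) ∈ A
      filter_upwards [hy, hc x y hyU] with z hz hz'
      rw [hz']
      convert hz using 2
      ring
  let p : E → X := Prod.fst
  have hpc : Continuous p := by
    rw [continuous_iff_continuousAt]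
    rintro ⟨x, s⟩
    rw [ContinuousAt, hn]
    change Tendsto p (map _ (𝓝 x)) (𝓝 x)
    rw [tendsto_map'_iff]
    exact tendsto_id
  have cov : IsCoveringMap p := by
    intro x
    let tR : TopologicalSpace ℝ := ⊥
    have : DiscreteTopology ℝ := ⟨rfl⟩
    refine IsEvenlyCovered.to_isEvenlyCovered_preimage (I := ℝ) ⟨inferInstance, U x, hxU x, hU x,
      (hU x).preimage hpc, ⟨⟨fun e => (⟨p e.1, e.2⟩, e.1.2 - Φ x e.1.1),
        fun u => ⟨((u.1 : X), u.2 + Φ x u.1), u.1.2⟩, ?_, ?_⟩, ?_, ?_⟩, ?_⟩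
    · rintro ⟨⟨y, t⟩, h⟩
      simp [p]
    · rintro ⟨⟨y, h⟩, t⟩
      simp [p]
    · refine Continuous.prodMk (by fun_prop) ?_
      rw [continuous_iff_continuousAt]
      rintro ⟨⟨y, t⟩, h⟩
      rw [ContinuousAt, nhds_discrete ℝ, tendsto_pure]
      rw [nhds_subtype_eq_comap, eventually_comap, hn]
      change ∀ᶠ z in 𝓝 y, _
      filter_upwards [hc x y h] with z hz
      rintro ⟨a, ha⟩ rfl
      simp only
      linarith
    · refine Continuous.subtype_mk ?_ _
      rw [continuous_iff_continuousAt]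
      rintro ⟨⟨y, h⟩, t⟩
      rw [ContinuousAt, nhds_prod_eq, nhds_discrete ℝ, hn, prod_pure, tendsto_map'_iff]
      change Tendsto _ _ (map _ (𝓝 y))
      have h1 : Tendsto (Subtype.val : U x → X) (𝓝 ⟨y, h⟩) (𝓝 y) :=
        continuous_subtype_val.continuousAt
      refine Tendsto.congr' ?_ (tendsto_map.comp h1)
      filter_upwards [h1.eventually (hc x y h)] with z hz
      simp only [Function.comp]
      rw [hz]
      congr 1
      ring
    · rintro ⟨⟨y, t⟩, h⟩
      rfl
  obtain ⟨x0⟩ : Nonempty X := inferInstance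
  obtain ⟨F, ⟨-, hF⟩, -⟩ := cov.existsUnique_continuousMap_lifts (ContinuousMap.id X) x0 (x0, (0:ℝ)) rfl
  have hF' : ∀ x, (F x).1 = x := fun x => congrFun hF x
  refine ⟨fun x => (F x).2, fun x => ?_⟩
  have h1 : Tendsto F (𝓝 x) (𝓝 (F x)) := F.continuous.continuousAt
  rw [hn] at h1
  have h2 : {e : X × ℝ | e.2 = (F x).2 + (Φ x e.1 - Φ x x)} ∈ n (F x) := by
    change ∀ᶠ y in 𝓝 (F x).1, _
    rw [hF']
    refine Eventually.of_forall fun y => ?_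
    simp
  filter_upwards [h1 h2] with z hz
  have : (F z).2 = (F x).2 + (Φ x (F z).1 - Φ x x) := hz
  rw [hF'] at this
  rw [this]; ring

theorem exists_potential (Ω : Set ℂ) (hΩ : IsOpen Ω) (hsc : SimplyConnectedSpace Ω)
    (V : ℂ → ℂ) (hV : DifferentiableOn ℝ V Ω)
    (hcurl : ∀ z ∈ Ω, ∀ x y, ⟪fderiv ℝ V z x, y⟫ = ⟪fderiv ℝ V z y, x⟫) :
    ∃ φ : ℂ → ℝ, ∀ z ∈ Ω, HasFDerivAt φ (innerSL ℝ (V z)) z := by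
  have := hΩ.locallyPathConnectedSpace
  have hball : ∀ x : Ω, ∃ r > 0, Metric.ball (x : ℂ) r ⊆ Ω := fun x =>
    Metric.isOpen_iff.1 hΩ x x.2
  choose r hr hrΩ using hball
  have hloc : ∀ x : Ω, ∃ f : ℂ → ℝ, ∀ z ∈ Metric.ball (x : ℂ) (r x),
      HasFDerivAt f (innerSL ℝ (V z)) z := by
    intro x
    refine Convex.exists_forall_hasFDerivAt_of_fderiv_symmetric (convex_ball _ _)
      Metric.isOpen_ball (ω := fun z => innerSL ℝ (V z)) ?_ ?_
    · intro z hz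
      have := (hV z (hrΩ x hz)).differentiableAt (hΩ.mem_nhds (hrΩ x hz))
      exact ((innerSL ℝ).differentiableAt.comp z this).differentiableWithinAt
    · intro z hz a b
      have := (hV z (hrΩ x hz)).differentiableAt (hΩ.mem_nhds (hrΩ x hz))
      have h2 : HasFDerivAt (fun z => innerSL ℝ (V z)) ((innerSL ℝ).comp (fderiv ℝ V z)) z :=
        (innerSL ℝ).hasFDerivAt.comp z this.hasFDerivAt
      rw [h2.fderiv]
      exact hcurl z (hrΩ x hz) a b
  choose f hf using hloc
  have key : ∀ (g h : ℂ → ℝ) (B : Set ℂ), IsOpen B → Convex ℝ B →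
      (∀ z ∈ B, HasFDerivAt g (innerSL ℝ (V z)) z) → (∀ z ∈ B, HasFDerivAt h (innerSL ℝ (V z)) z) →
      ∀ y ∈ B, ∀ z ∈ B, g z - g y = h z - h y := by
    intro g h B hB hBc hg hh y hy z hz
    have := hBc.is_const_of_fderivWithin_eq_zero (𝕜 := ℝ) (f := g - h)
      (fun w hw => ((hg w hw).sub (hh w hw)).differentiableAt.differentiableWithinAt) ?_ hy hz
    · simp only [Pi.sub_apply] at this; linarith
    · intro w hw
      rw [fderivWithin_of_isOpen hB hw, ((hg w hw).sub (hh w hw)).fderiv, sub_self]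
  obtain ⟨φ, hφ⟩ := glue_primitives (X := Ω) (fun x => Subtype.val ⁻¹' Metric.ball (x : ℂ) (r x))
    (fun x => Metric.isOpen_ball.preimage continuous_subtype_val)
    (fun x => Metric.mem_ball_self (hr x)) (fun x y => f x y) (by
      intro x y hy
      have hB : Metric.ball (x : ℂ) (r x) ∩ Metric.ball (y : ℂ) (r y) ∈ 𝓝 (y : ℂ) :=
        (Metric.isOpen_ball.inter Metric.isOpen_ball).mem_nhds ⟨hy, Metric.mem_ball_self (hr y)⟩
      filter_upwards [continuous_subtype_val.continuousAt.preimage_mem_nhds hB] with z hz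
      exact key _ _ _ (Metric.isOpen_ball.inter Metric.isOpen_ball)
        ((convex_ball _ _).inter (convex_ball _ _)) (fun w hw => hf y w hw.2)
        (fun w hw => hf x w hw.1) y ⟨hy, Metric.mem_ball_self (hr y)⟩ z hz)
  classical
  refine ⟨fun z => if h : z ∈ Ω then φ ⟨z, h⟩ else 0, fun z hz => ?_⟩
  have h1 := (hf ⟨z, hz⟩ z (Metric.mem_ball_self (hr _))).add_const (φ ⟨z, hz⟩ - f ⟨z, hz⟩ z)
  refine h1.congr_of_eventuallyEq ?_
  have h2 := hφ ⟨z, hz⟩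
  rw [nhds_subtype_eq_comap, eventually_comap] at h2
  filter_upwards [h2, hΩ.mem_nhds hz] with w hw hwΩ
  have := hw ⟨w, hwΩ⟩ rfl
  simp only [hwΩ, dif_pos]
  linarith


/-- planar divergence -/
noncomputable def dvg (X : ℂ → ℂ) (x : ℂ) : ℝ := (fderiv ℝ X x 1).re + (fderiv ℝ X x Complex.I).im

theorem infDist_grad (Ω : Set ℂ) (hΩ : IsOpen Ω) (hne : Ωᶜ.Nonempty)
    (v : ℂ) (C : ℝ) (x : ℂ) (hx : x ∈ Ω)
    (hC : ∀ y ∉ Ω, dist x y = Metric.infDist x Ωᶜ → |⟪x - y, v⟫| ≤ C * ‖x - y‖ ^ 2)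
    (hd : DifferentiableAt ℝ (fun z => Metric.infDist z Ωᶜ) x) :
    |fderiv ℝ (fun z => Metric.infDist z Ωᶜ) x v| ≤ C * Metric.infDist x Ωᶜ := by
  have hcl : IsClosed Ωᶜ := hΩ.isClosed_compl
  obtain ⟨y, hy, hxy⟩ := hcl.exists_infDist_eq_dist hne x
  have hpos : 0 < Metric.infDist x Ωᶜ :=
    (hcl.notMem_iff_infDist_pos hne).1 (by simpa using hx)
  have hCy := hC y hy hxy.symm
  set d : ℂ → ℝ := fun z => Metric.infDist z Ωᶜ with hdd
  have hmin : IsLocalMin (fun z => ‖z - y‖ ^ 2 - (d z) ^ 2) x := by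
    refine Eventually.of_forall fun z => ?_
    have h1 : d z ≤ ‖z - y‖ := by rw [← dist_eq_norm]; exact Metric.infDist_le_dist_of_mem hy
    have h2 : d x = ‖x - y‖ := by rw [← dist_eq_norm]; exact hxy
    have h3 : 0 ≤ d z := Metric.infDist_nonneg
    simp only [h2, sub_self]
    nlinarith
  have hF := (((hasFDerivAt_id x).sub_const y).norm_sq).sub (hd.hasFDerivAt.pow 2)
  have h0 := hmin.hasFDerivAt_eq_zero hF
  have h1 := congrArg (fun L => L v) h0
  simp only [id_eq, _root_.sub_apply, _root_.smul_apply,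
    ContinuousLinearMap.comp_apply, innerSL_apply_apply, _root_.zero_apply,
    ContinuousLinearMap.id_apply, smul_eq_mul, nsmul_eq_mul] at h1
  change _ = (0:ℝ) at h1
  push_cast at h1
  rw [pow_one] at h1
  have h2 : ‖x - y‖ = d x := by rw [← dist_eq_norm]; exact hxy.symm
  have h3 : ⟪x - y, v⟫ = d x * fderiv ℝ d x v := by linarith
  rw [h3, h2, abs_mul, abs_of_pos (show 0 < d x from hpos)] at hCy
  have : d x * |fderiv ℝ d x v| ≤ d x * (C * d x) := by nlinarith
  exact le_of_mul_le_mul_left this hpos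

theorem lineDeriv_bound (f d : ℂ → ℝ) (N : ℝ) (hN : ∀ x y, |f x - f y| ≤ N * |d x - d y|)
    (x v : ℂ) (hf : DifferentiableAt ℝ f x) (hd : DifferentiableAt ℝ d x) :
    |fderiv ℝ f x v| ≤ N * |fderiv ℝ d x v| := by
  have h1 := (hf.hasFDerivAt.hasLineDerivAt v).tendsto_slope_zero
  have h2 := (hd.hasFDerivAt.hasLineDerivAt v).tendsto_slope_zero
  refine le_of_tendsto_of_tendsto h1.abs (h2.abs.const_mul N) ?_
  refine Eventually.of_forall fun t => ?_
  simp only [smul_eq_mul, abs_mul]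
  have := hN (x + t • v) x
  have h3 := abs_nonneg (t⁻¹)
  nlinarith

theorem parts_aux (Ω : Set ℂ) (hΩ : IsOpen Ω) (hb : Bornology.IsBounded Ω)
    (μ : Measure ℂ) [μ.IsAddHaarMeasure] (χ d : ℂ → ℝ) (K : NNReal) (hχ : LipschitzWith K χ) (hd : Continuous d)
    (hdΩ : ∀ x, x ∈ Ω ↔ 0 < d x) (δ : ℝ) (hδ : 0 < δ) (hχ0 : ∀ x, d x ≤ δ → χ x = 0)
    (f : ℂ → ℝ) (hf : ContDiffOn ℝ 1 f Ω) (v : ℂ) :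
    ∫ x in Ω, lineDeriv ℝ χ x v * f x ∂μ = - ∫ x in Ω, χ x * fderiv ℝ f x v ∂μ := by
  obtain ⟨η, hη, -, hη0, hη1⟩ := exists_contMDiff_zero_iff_one_iff_of_isClosed
    (n := ⊤) (modelWithCornersSelf ℝ ℂ) (s := {x | d x ≤ δ / 2}) (t := {x | δ ≤ d x})
    (isClosed_le hd continuous_const) (isClosed_le continuous_const hd)
    (by
      rw [Set.disjoint_left]
      intro x hx hx'
      simp only [mem_ofPred_eq] at hx hx'
      linarith)
  have hη' : ContDiff ℝ 1 η := hη.contDiff.of_le (by exact_mod_cast le_top)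
  set g : ℂ → ℝ := fun x => η x * f x with hg
  have hsub : {x | δ / 2 ≤ d x} ⊆ Ω := fun x hx => (hdΩ x).2 (by
    simp only [mem_ofPred_eq] at hx; linarith)
  have hcs : HasCompactSupport g := by
    refine HasCompactSupport.intro (K := {x | δ / 2 ≤ d x}) ?_ ?_
    · exact Metric.isCompact_of_isClosed_isBounded (isClosed_le continuous_const hd)
        (hb.subset hsub)
    · intro x hx
      simp only [mem_ofPred_eq, not_le] at hx
      have : η x = 0 := (hη0 x).1 hx.le
      simp [hg, this]
  have hgd : ContDiff ℝ 1 g := by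
    rw [contDiff_iff_contDiffAt]
    intro x
    by_cases hx : x ∈ Ω
    · exact hη'.contDiffAt.mul (hf.contDiffAt (hΩ.mem_nhds hx))
    · have hx0 : d x < δ / 2 := by
        rw [hdΩ] at hx; linarith
      refine (contDiffAt_const (c := (0:ℝ))).congr_of_eventuallyEq ?_
      filter_upwards [hd.continuousAt.eventually_lt continuousAt_const hx0] with y hy
      have : η y = 0 := (hη0 y).1 (le_of_lt hy)
      simp [hg, this]
  obtain ⟨D, hD⟩ := ContDiff.lipschitzWith_of_hasCompactSupport hcs hgd (by simp)
  have main := LipschitzWith.integral_lineDeriv_mul_eq (μ := μ) hχ hD hcs v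
  rw [← integral_neg, ← integral_indicator hΩ.measurableSet, ← integral_indicator hΩ.measurableSet]
  suffices h : (∀ x, Ω.indicator (fun x => lineDeriv ℝ χ x v * f x) x = lineDeriv ℝ χ x v * g x) ∧
      (∀ x, Ω.indicator (fun x => -(χ x * fderiv ℝ f x v)) x = lineDeriv ℝ g x (-v) * χ x) by
    simp only [h.1, h.2]; exact main
  refine ⟨?_, ?_⟩
  · intro x
    by_cases hx : x ∈ Ω
    · rw [indicator_of_mem hx]
      rcases lt_or_ge (d x) δ with h | h
      · have : lineDeriv ℝ χ x v = 0 := by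
          have h0 : χ =ᶠ[𝓝 x] fun _ => 0 := by
            filter_upwards [(isOpen_lt hd continuous_const).mem_nhds h] with y hy
            exact hχ0 y (le_of_lt hy)
          rw [h0.lineDeriv_eq, lineDeriv]; simp
        simp [this]
      · have : η x = 1 := (hη1 x).1 h
        simp [hg, this]
    · rw [indicator_of_notMem hx]
      have : η x = 0 := (hη0 x).1 (by rw [hdΩ] at hx; simp only [mem_ofPred_eq]; linarith)
      simp [hg, this]
  · intro x
    by_cases hx : x ∈ Ω
    · rw [indicator_of_mem hx]
      rcases le_or_gt (d x) δ with h | h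
      · simp [hχ0 x h]
      · have h0 : g =ᶠ[𝓝 x] f := by
          filter_upwards [(isOpen_lt continuous_const hd).mem_nhds h] with y hy
          have : η y = 1 := (hη1 y).1 (le_of_lt hy)
          simp [hg, this]
        have hfx : DifferentiableAt ℝ f x :=
          (hf.contDiffAt (hΩ.mem_nhds hx)).differentiableAt (by simp)
        rw [h0.lineDeriv_eq, hfx.lineDeriv_eq_fderiv]
        simp; ring
    · rw [indicator_of_notMem hx]
      rw [hχ0 x (by rw [hdΩ] at hx; linarith)]
      simp


set_option maxHeartbeats 1000000 in
theorem div_zero_aux (Ω : Set ℂ) (hΩ : IsOpen Ω) (hb : Bornology.IsBounded Ω)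
    (μ : Measure ℂ) [μ.IsAddHaarMeasure]
    (X : ℂ → ℂ) (hX : ContDiffOn ℝ 1 X Ω) (C : ℝ)
    (hC : ∀ x ∈ Ω, ∀ y ∉ Ω, dist x y = Metric.infDist x Ωᶜ → |⟪x - y, X x⟫| ≤ C * ‖x - y‖ ^ 2)
    (B : ℝ) (hB : ∀ x ∈ Ω, ‖X x‖ ≤ B)
    (M : ℝ) (hM : ∀ x ∈ Ω, ‖fderiv ℝ X x‖ ≤ M) :
    ∫ x in Ω, dvg X x ∂μ = 0 := by
  have hcl : IsClosed Ωᶜ := hΩ.isClosed_compl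
  have hne : Ωᶜ.Nonempty := by
    by_contra h
    rw [not_nonempty_iff_eq_empty, compl_empty_iff] at h
    rw [h] at hb
    exact NormedSpace.unbounded_univ ℝ ℂ hb
  have hfin : μ Ω < ⊤ := hb.measure_lt_top
  haveI : IsFiniteMeasure (μ.restrict Ω) := ⟨by simpa using hfin⟩
  have hXc : ContinuousOn X Ω := hX.continuousOn
  have hDc : ContinuousOn (fderiv ℝ X) Ω := hX.continuousOn_fderiv_of_isOpen hΩ (by simp)
  have hXd : ∀ x ∈ Ω, DifferentiableAt ℝ X x := fun x hx =>
    (hX.contDiffAt (hΩ.mem_nhds hx)).differentiableAt (by simp)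
  set d : ℂ → ℝ := fun z => Metric.infDist z Ωᶜ with hdd
  have hdL : LipschitzWith 1 d := Metric.lipschitz_infDist_pt _
  have hdΩ : ∀ x, x ∈ Ω ↔ 0 < d x := fun x => by
    rw [← hcl.notMem_iff_infDist_pos hne]; simp
  set χ : ℕ → ℂ → ℝ := fun n x => min 1 (max 0 (((n:ℝ) + 1) * d x - 1)) with hχdef
  have hχN : ∀ n x y, |χ n x - χ n y| ≤ ((n:ℝ) + 1) * |d x - d y| := by
    intro n x y
    have h1 := abs_min_sub_min_le_max (1:ℝ) (max 0 (((n:ℝ) + 1) * d x - 1)) 1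
      (max 0 (((n:ℝ) + 1) * d y - 1))
    have h2 := abs_max_sub_max_le_max (0:ℝ) (((n:ℝ) + 1) * d x - 1) 0 (((n:ℝ) + 1) * d y - 1)
    rw [sub_self, abs_zero, max_eq_right (a := (0:ℝ)) (abs_nonneg (_ - _))] at h1
    rw [sub_self, abs_zero, max_eq_right (a := (0:ℝ)) (abs_nonneg (_ - _))] at h2
    refine (h1.trans h2).trans (le_of_eq ?_)
    rw [show ((n:ℝ) + 1) * d x - 1 - (((n:ℝ) + 1) * d y - 1) = ((n:ℝ) + 1) * (d x - d y) by ring,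
      abs_mul, abs_of_pos (by positivity)]
  have hχL : ∀ n : ℕ, LipschitzWith ((n:NNReal) + 1) (χ n) := by
    intro n
    refine LipschitzWith.of_dist_le_mul fun x y => ?_
    have h1 := hdL.dist_le_mul x y
    rw [Real.dist_eq] at h1 ⊢
    refine (hχN n x y).trans ?_
    push_cast
    have : (0:ℝ) ≤ (n:ℝ) + 1 := by positivity
    simp at h1
    gcongr
  have hχ01 : ∀ n x, 0 ≤ χ n x ∧ χ n x ≤ 1 := fun n x =>
    ⟨le_min zero_le_one (le_max_left _ _), min_le_left _ _⟩
  have hχ0 : ∀ (n : ℕ) x, d x ≤ 1 / ((n:ℝ) + 1) → χ n x = 0 := by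
    intro n x h
    have hn : (0:ℝ) < (n:ℝ) + 1 := by positivity
    rw [le_div_iff₀ hn] at h
    simp only [hχdef]
    rw [max_eq_left (by linarith)]; simp
  have hχ1 : ∀ (n : ℕ) x, 2 ≤ ((n:ℝ) + 1) * d x → χ n x = 1 := by
    intro n x h
    simp only [hχdef]
    rw [max_eq_right (by linarith), min_eq_left (by linarith)]
  -- derivative identities
  have hre : ∀ x ∈ Ω, ∀ v, fderiv ℝ (fun z => (X z).re) x v = (fderiv ℝ X x v).re := by
    intro x hx v
    have := (Complex.reCLM.hasFDerivAt.comp x (hXd x hx).hasFDerivAt).fderiv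
    exact congrArg (fun L => L v) this
  have him : ∀ x ∈ Ω, ∀ v, fderiv ℝ (fun z => (X z).im) x v = (fderiv ℝ X x v).im := by
    intro x hx v
    have := (Complex.imCLM.hasFDerivAt.comp x (hXd x hx).hasFDerivAt).fderiv
    exact congrArg (fun L => L v) this
  have hreC : ContDiffOn ℝ 1 (fun z => (X z).re) Ω := Complex.reCLM.contDiff.comp_contDiffOn hX
  have himC : ContDiffOn ℝ 1 (fun z => (X z).im) Ω := Complex.imCLM.contDiff.comp_contDiffOn hX
  have hmre : AEStronglyMeasurable (fun z => (X z).re) (μ.restrict Ω) :=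
    hreC.continuousOn.aestronglyMeasurable hΩ.measurableSet
  have hmim : AEStronglyMeasurable (fun z => (X z).im) (μ.restrict Ω) :=
    himC.continuousOn.aestronglyMeasurable hΩ.measurableSet
  have hmD1 : AEStronglyMeasurable (fun z => (fderiv ℝ X z 1).re) (μ.restrict Ω) :=
    (Complex.continuous_re.comp_continuousOn (hDc.clm_apply continuousOn_const)).aestronglyMeasurable
      hΩ.measurableSet
  have hmD2 : AEStronglyMeasurable (fun z => (fderiv ℝ X z Complex.I).im) (μ.restrict Ω) :=
    (Complex.continuous_im.comp_continuousOn (hDc.clm_apply continuousOn_const)).aestronglyMeasurable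
      hΩ.measurableSet
  have hbD1 : ∀ x ∈ Ω, |(fderiv ℝ X x 1).re| ≤ M := fun x hx => by
    refine (Complex.abs_re_le_norm _).trans ?_
    have := (fderiv ℝ X x).le_of_opNorm_le (hM x hx) 1
    simpa using this
  have hbD2 : ∀ x ∈ Ω, |(fderiv ℝ X x Complex.I).im| ≤ M := fun x hx => by
    refine (Complex.abs_im_le_norm _).trans ?_
    have := (fderiv ℝ X x).le_of_opNorm_le (hM x hx) Complex.I
    simpa using this
  have hmχ : ∀ n, AEStronglyMeasurable (χ n) (μ.restrict Ω) := fun n =>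
    (hχL n).continuous.aestronglyMeasurable
  have hmL : ∀ n v, AEStronglyMeasurable (fun x => lineDeriv ℝ (χ n) x v) (μ.restrict Ω) :=
    fun n v => (measurable_lineDeriv (hχL n).continuous).aestronglyMeasurable
  have key : ∀ n, ∫ x in Ω, (lineDeriv ℝ (χ n) x 1 * (X x).re + lineDeriv ℝ (χ n) x Complex.I * (X x).im) ∂μ
      = - ∫ x in Ω, χ n x * dvg X x ∂μ := by
    intro n
    have hn : (0:ℝ) < 1 / ((n:ℝ) + 1) := by positivity
    have e1 := parts_aux Ω hΩ hb μ (χ n) d _ (hχL n) hdL.continuous hdΩ _ hn (hχ0 n) _ hreC 1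
    have e2 := parts_aux Ω hΩ hb μ (χ n) d _ (hχL n) hdL.continuous hdΩ _ hn (hχ0 n) _ himC Complex.I
    rw [setIntegral_congr_fun hΩ.measurableSet (f := fun x => χ n x * fderiv ℝ (fun z => (X z).re) x 1)
      (g := fun x => χ n x * (fderiv ℝ X x 1).re)
      (fun x hx => by simp only [hre x hx])] at e1
    rw [setIntegral_congr_fun hΩ.measurableSet (f := fun x => χ n x * fderiv ℝ (fun z => (X z).im) x Complex.I)
      (g := fun x => χ n x * (fderiv ℝ X x Complex.I).im)
      (fun x hx => by simp only [him x hx])] at e2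
    have bL : ∀ x (v : ℂ), ‖v‖ = 1 → |lineDeriv ℝ (χ n) x v| ≤ (n:ℝ) + 1 := fun x v hv => by
      have := norm_lineDeriv_le_of_lipschitz (𝕜 := ℝ) (x₀ := x) (v := v) (hχL n)
      simpa [hv] using this
    have i1 : IntegrableOn (fun x => lineDeriv ℝ (χ n) x 1 * (X x).re) Ω μ := by
      refine Integrable.of_bound ((hmL n 1).mul hmre) (((n:ℝ) + 1) * B) ?_
      filter_upwards [ae_restrict_mem hΩ.measurableSet] with x hx
      rw [Real.norm_eq_abs, abs_mul]
      have h1 := bL x 1 (by simp)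
      have h2 := (Complex.abs_re_le_norm (X x)).trans (hB x hx)
      gcongr
    have i2 : IntegrableOn (fun x => lineDeriv ℝ (χ n) x Complex.I * (X x).im) Ω μ := by
      refine Integrable.of_bound ((hmL n _).mul hmim) (((n:ℝ) + 1) * B) ?_
      filter_upwards [ae_restrict_mem hΩ.measurableSet] with x hx
      rw [Real.norm_eq_abs, abs_mul]
      have h1 := bL x Complex.I (by simp)
      have h2 := (Complex.abs_im_le_norm (X x)).trans (hB x hx)
      gcongr
    have i3 : IntegrableOn (fun x => χ n x * (fderiv ℝ X x 1).re) Ω μ := by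
      refine Integrable.of_bound ((hmχ n).mul hmD1) (1 * M) ?_
      filter_upwards [ae_restrict_mem hΩ.measurableSet] with x hx
      rw [Real.norm_eq_abs, abs_mul, abs_of_nonneg (hχ01 n x).1]
      have h1 := (hχ01 n x).2
      have h2 := hbD1 x hx
      gcongr
    have i4 : IntegrableOn (fun x => χ n x * (fderiv ℝ X x Complex.I).im) Ω μ := by
      refine Integrable.of_bound ((hmχ n).mul hmD2) (1 * M) ?_
      filter_upwards [ae_restrict_mem hΩ.measurableSet] with x hx
      rw [Real.norm_eq_abs, abs_mul, abs_of_nonneg (hχ01 n x).1]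
      have h1 := (hχ01 n x).2
      have h2 := hbD2 x hx
      gcongr
    rw [integral_add i1 i2, e1, e2, ← neg_add, ← integral_add i3 i4]
    simp only [dvg, mul_add]
  have lim1 : Tendsto (fun n : ℕ => ∫ x in Ω, χ n x * dvg X x ∂μ) atTop (𝓝 (∫ x in Ω, dvg X x ∂μ)) := by
    refine tendsto_integral_of_dominated_convergence (fun _ => M + M) ?_ ?_ ?_ ?_
    · intro n
      exact (hmχ n).mul (hmD1.add hmD2)
    · exact integrableOn_const hfin.ne
    · intro n
      filter_upwards [ae_restrict_mem hΩ.measurableSet] with x hx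
      rw [Real.norm_eq_abs, abs_mul, abs_of_nonneg (hχ01 n x).1]
      have h1 := (hχ01 n x).2
      have h2 := hbD1 x hx
      have h3 := hbD2 x hx
      have h4 : |dvg X x| ≤ M + M := (abs_add_le _ _).trans (add_le_add h2 h3)
      nlinarith [abs_nonneg (dvg X x), (hχ01 n x).1]
    · filter_upwards [ae_restrict_mem hΩ.measurableSet] with x hx
      refine tendsto_const_nhds.congr' ?_
      have hdx := (hdΩ x).1 hx
      have : ∀ᶠ n : ℕ in atTop, 2 / d x ≤ (n:ℝ) := tendsto_natCast_atTop_atTop.eventually_ge_atTop _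
      filter_upwards [this] with n hn
      rw [div_le_iff₀ hdx] at hn
      rw [hχ1 n x (by nlinarith), one_mul]
  have hae : ∀ᵐ x ∂(μ.restrict Ω), x ∈ Ω ∧ DifferentiableAt ℝ d x ∧ ∀ n, DifferentiableAt ℝ (χ n) x := by
    filter_upwards [ae_restrict_mem hΩ.measurableSet,
      ae_restrict_of_ae (hdL.ae_differentiableAt (μ := μ)),
      ae_all_iff.2 (fun n => ae_restrict_of_ae ((hχL n).ae_differentiableAt (μ := μ)))] with x h1 h2 h3
    exact ⟨h1, h2, h3⟩
  have hrew : ∀ x n, DifferentiableAt ℝ (χ n) x →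
      lineDeriv ℝ (χ n) x 1 * (X x).re + lineDeriv ℝ (χ n) x Complex.I * (X x).im
        = fderiv ℝ (χ n) x (X x) := by
    intro x n h
    rw [h.lineDeriv_eq_fderiv, h.lineDeriv_eq_fderiv]
    conv_rhs => rw [show X x = (X x).re • (1:ℂ) + (X x).im • Complex.I by
      simp [Complex.re_add_im]]
    rw [map_add, map_smul, map_smul]
    simp only [smul_eq_mul]; ring
  have hzero : ∀ x (n : ℕ), 2 < ((n:ℝ) + 1) * d x → fderiv ℝ (χ n) x (X x) = 0 := by
    intro x n h
    have : χ n =ᶠ[𝓝 x] fun _ => 1 := by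
      have hc : Continuous fun y => ((n:ℝ) + 1) * d y := hdL.continuous.const_mul _
      filter_upwards [(isOpen_lt continuous_const hc).mem_nhds h] with y hy
      exact hχ1 n y (le_of_lt hy)
    rw [this.fderiv_eq]; simp
  have lim2 : Tendsto (fun n : ℕ => ∫ x in Ω, (lineDeriv ℝ (χ n) x 1 * (X x).re +
      lineDeriv ℝ (χ n) x Complex.I * (X x).im) ∂μ) atTop (𝓝 (∫ x in Ω, (0:ℝ) ∂μ)) := by
    refine tendsto_integral_of_dominated_convergence (fun _ => 2 * |C|) ?_ ?_ ?_ ?_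
    · intro n
      exact ((hmL n 1).mul hmre).add ((hmL n _).mul hmim)
    · exact integrableOn_const hfin.ne
    · intro n
      filter_upwards [hae] with x hx
      rw [hrew x n (hx.2.2 n), Real.norm_eq_abs]
      rcases lt_or_ge 2 (((n:ℝ) + 1) * d x) with h | h
      · rw [hzero x n h, abs_zero]; positivity
      · have h1 := lineDeriv_bound (χ n) d _ (hχN n) x (X x) (hx.2.2 n) hx.2.1
        have h2 := infDist_grad Ω hΩ hne (X x) C x hx.1 (hC x hx.1) hx.2.1
        have hdx := (hdΩ x).1 hx.1
        have h3 : C * d x ≤ |C| * d x := by gcongr; exact le_abs_self C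
        have hn : (0:ℝ) ≤ (n:ℝ) + 1 := by positivity
        calc _ ≤ ((n:ℝ) + 1) * |fderiv ℝ d x (X x)| := h1
          _ ≤ ((n:ℝ) + 1) * (|C| * d x) := by gcongr; exact h2.trans h3
          _ = |C| * (((n:ℝ) + 1) * d x) := by ring
          _ ≤ |C| * 2 := by gcongr
          _ = _ := by ring
    · filter_upwards [hae] with x hx
      refine tendsto_const_nhds.congr' ?_
      have hdx := (hdΩ x).1 hx.1
      have : ∀ᶠ n : ℕ in atTop, 2 / d x ≤ (n:ℝ) := tendsto_natCast_atTop_atTop.eventually_ge_atTop _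
      filter_upwards [this] with n hn
      rw [div_le_iff₀ hdx] at hn
      rw [hrew x n (hx.2.2 n), hzero x n (by nlinarith)]
  have h1 := tendsto_nhds_unique (lim2.congr key) lim1.neg
  simp at h1
  exact h1


/-- planar tangency to a set -/
def TanC (σ : Set ℂ) (z w : ℂ) : Prop :=
  ∃ c : ℝ → ℂ, (∀ s, c s ∈ σ) ∧ c 0 = z ∧ HasDerivAt c w 0

theorem curve_near (Γ : ℝ → ℂ) (hc : Continuous Γ) (hper : Function.Periodic Γ (2 * Real.pi))
    (hinj : InjOn Γ (Ico 0 (2 * Real.pi))) (t0 δ : ℝ) (hδ : 0 < δ) :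
    ∃ ρ > 0, ∀ z ∈ range Γ, ‖z - Γ t0‖ < ρ → ∃ s, |s - t0| < δ ∧ Γ s = z := by
  have hp : 0 < 2 * Real.pi := by positivity
  have hmod : ∀ a t, Γ (toIcoMod hp a t) = Γ t := fun a t => hper.sub_zsmul_eq _
  set K : Set ℝ := Icc (t0 - Real.pi) (t0 + Real.pi) ∩ {t | δ ≤ |t - t0|} with hK
  have hKc : IsCompact K := isCompact_Icc.inter_right
    (isClosed_le continuous_const (by fun_prop))
  have hKn : Γ t0 ∉ Γ '' K := by
    rintro ⟨t, ⟨⟨ht1, ht2⟩, ht3⟩, ht⟩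
    have h1 : toIcoMod hp 0 t = toIcoMod hp 0 t0 :=
      hinj (toIcoMod_mem_Ico' hp t) (toIcoMod_mem_Ico' hp t0) (by rw [hmod, hmod, ht])
    obtain ⟨n, hn⟩ := (toIcoMod_eq_toIcoMod hp).1 h1
    rw [zsmul_eq_mul] at hn
    simp only [mem_ofPred_eq] at ht3
    have h2 : |t - t0| ≤ Real.pi := abs_le.2 ⟨by linarith, by linarith⟩
    have h3 : |t - t0| = |(n:ℝ)| * (2 * Real.pi) := by
      rw [abs_sub_comm, hn, abs_mul, abs_of_pos hp]
    rcases eq_or_ne n 0 with h | h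
    · rw [h] at h3; simp at h3
      rw [h3] at ht3; simp at ht3; linarith
    · have : (1:ℝ) ≤ |(n:ℝ)| := by exact_mod_cast Int.one_le_abs h
      nlinarith [Real.pi_pos]
  have hcl : IsClosed (Γ '' K) := (hKc.image hc).isClosed
  obtain ⟨ρ, hρ, hb⟩ := Metric.isOpen_iff.1 hcl.isOpen_compl (Γ t0) hKn
  refine ⟨ρ, hρ, ?_⟩
  rintro z ⟨t, rfl⟩ hz
  refine ⟨toIcoMod hp (t0 - Real.pi) t, ?_, hmod _ _⟩
  by_contra h
  push Not at h
  have h1 := toIcoMod_mem_Ico hp (t0 - Real.pi) t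
  refine hb (show Γ t ∈ Metric.ball (Γ t0) ρ by rwa [mem_ball_iff_norm]) ⟨_, ⟨⟨h1.1, ?_⟩, h⟩, hmod (t0 - Real.pi) t⟩
  have := h1.2
  linarith

theorem tan_parallel (Γ : ℝ → ℂ) (hd : Differentiable ℝ Γ) (hper : Function.Periodic Γ (2 * Real.pi))
    (hinj : InjOn Γ (Ico 0 (2 * Real.pi))) (t0 : ℝ) (hreg : deriv Γ t0 ≠ 0) (w : ℂ)
    (hw : TanC (range Γ) (Γ t0) w) : ∃ a : ℝ, w = a • deriv Γ t0 := by
  set T := deriv Γ t0 with hT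
  set L : ℂ →L[ℝ] ℝ := innerSL ℝ (Complex.I * T) with hL
  have hLw : ∀ v, L v = T.re * v.im - T.im * v.re := by
    intro v
    simp [hL, Complex.inner]; ring
  have hΓ : HasDerivAt Γ T t0 := (hd t0).hasDerivAt
  have hLT : L T = 0 := by rw [hLw]; ring
  suffices h0 : L w = 0 by
    rw [hLw] at h0
    have hn : T.re ^ 2 + T.im ^ 2 ≠ 0 := by
      intro h
      apply hreg
      apply Complex.ext
      · simp; nlinarith [sq_nonneg T.re, sq_nonneg T.im]
      · simp; nlinarith [sq_nonneg T.re, sq_nonneg T.im]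
    refine ⟨(w.re * T.re + w.im * T.im) / (T.re ^ 2 + T.im ^ 2), ?_⟩
    apply Complex.ext
    · simp only [Complex.smul_re, smul_eq_mul]
      field_simp
      linear_combination (-T.im) * h0
    · simp only [Complex.smul_im, smul_eq_mul]
      field_simp
      linear_combination (T.re) * h0
  have o1 : (fun s => L (Γ s - Γ t0)) =o[𝓝 t0] fun s => s - t0 := by
    have := (L.hasFDerivAt.comp_hasDerivAt t0 hΓ)
    rw [hasDerivAt_iff_isLittleO] at this
    simpa [hLT] using this
  have o2 : (fun s => s - t0) =O[𝓝 t0] fun s => Γ s - Γ t0 :=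
    (HasFDerivAt.isTheta_sub hΓ.hasFDerivAt (by
      refine AntilipschitzWith.isInducing (K := ‖T‖₊⁻¹) ?_ (map_continuous _)
      refine AntilipschitzWith.of_le_mul_dist fun x y => le_of_eq ?_
      have : 0 < ‖T‖ := norm_pos_iff.2 hreg
      rw [dist_eq_norm, dist_eq_norm, ← map_sub, ContinuousLinearMap.toSpanSingleton_apply, norm_smul]
      push_cast
      field_simp)).isBigO_symm
  have o3 := o1.trans_isBigO o2
  obtain ⟨c, hcσ, hc0, hcd⟩ := hw
  have lim1 : Tendsto (fun s : ℝ => |L (s⁻¹ • (c s - c 0))|) (𝓝[≠] 0) (𝓝 |L w|) := by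
    have := hcd.tendsto_slope_zero
    simp only [zero_add] at this
    exact ((L.continuous.tendsto w).comp this).abs
  have lim2 : Tendsto (fun s : ℝ => ‖s⁻¹ • (c s - c 0)‖) (𝓝[≠] 0) (𝓝 ‖w‖) := by
    have := hcd.tendsto_slope_zero
    simp only [zero_add] at this
    exact this.norm
  have key : ∀ ε > 0, |L w| ≤ ε * ‖w‖ := by
    intro ε hε
    have h1 := o3.bound hε
    rw [Metric.eventually_nhds_iff] at h1
    obtain ⟨δ, hδ, h1⟩ := h1
    obtain ⟨ρ, hρ, h2⟩ := curve_near Γ hd.continuous hper hinj t0 δ hδ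
    refine le_of_tendsto_of_tendsto lim1 (lim2.const_mul ε) ?_
    have hcc : ∀ᶠ s in 𝓝 (0:ℝ), ‖c s - Γ t0‖ < ρ := by
      have := hcd.continuousAt.tendsto
      rw [hc0] at this
      have h := Metric.tendsto_nhds.1 this ρ hρ
      simpa [dist_eq_norm] using h
    filter_upwards [nhdsWithin_le_nhds hcc] with s hs
    obtain ⟨t, ht, hts⟩ := h2 _ (hcσ s) hs
    have h3 := h1 (show dist t t0 < δ by rwa [Real.dist_eq])
    rw [hts, ← hc0, Real.norm_eq_abs] at h3
    rw [map_smul, smul_eq_mul, abs_mul, norm_smul, Real.norm_eq_abs]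
    have := abs_nonneg s⁻¹
    nlinarith
  have : |L w| ≤ 0 := by
    refine ge_of_tendsto (x := 𝓝[>] (0:ℝ)) (f := fun ε => ε * ‖w‖) ?_ ?_
    · have : Tendsto (fun ε : ℝ => ε * ‖w‖) (𝓝 0) (𝓝 (0 * ‖w‖)) := (continuous_mul_const _).tendsto _
      rw [zero_mul] at this
      exact this.mono_left nhdsWithin_le_nhds
    · filter_upwards [self_mem_nhdsWithin] with ε hε using key ε hε
  exact abs_eq_zero.1 (le_antisymm this (abs_nonneg _))

theorem tan_nearest (σ : Set ℂ) (x z w : ℂ) (hmin : ∀ y ∈ σ, dist x z ≤ dist x y)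
    (hw : TanC σ z w) : ⟪x - z, w⟫ = 0 := by
  obtain ⟨c, hcσ, hc0, hcd⟩ := hw
  have h1 : HasDerivAt (fun s => ‖x - c s‖ ^ 2) (2 * ⟪x - c 0, -w⟫) 0 := by
    have := (hcd.const_sub x).norm_sq
    simpa using this
  have h2 : IsLocalMin (fun s => ‖x - c s‖ ^ 2) 0 := by
    refine Eventually.of_forall fun s => ?_
    have := hmin _ (hcσ s)
    rw [dist_eq_norm, dist_eq_norm] at this
    simp only [hc0]
    gcongr
  have h3 := h2.hasDerivAt_eq_zero h1
  rw [hc0, inner_neg_right] at h3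
  linarith

theorem const_parallel (Γ : ℝ → ℂ) (hd : Differentiable ℝ Γ)
    (hper : Function.Periodic Γ (2 * Real.pi)) (w : ℂ)
    (hw : ∀ t, ∃ a : ℝ, w = a • deriv Γ t) (hreg : ∀ t, deriv Γ t ≠ 0) : w = 0 := by
  obtain ⟨t, ht, h⟩ := exists_hasDerivAt_eq_zero (f := fun t => ⟪w, Γ t⟫) (f' := fun t => ⟪w, deriv Γ t⟫)
    (a := 0) (b := 2 * Real.pi) (by positivity)
    ((continuous_const.inner hd.continuous).continuousOn)
    (by rw [← hper 0, zero_add])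
    (fun t _ => by simpa using (hasDerivAt_const t w).inner ℝ (hd t).hasDerivAt)
  obtain ⟨a, ha⟩ := hw t
  rw [ha, inner_smul_left] at h
  simp at h
  rcases h with h | h
  · rw [ha, h, zero_smul]
  · exact absurd h (hreg t)


set_option maxHeartbeats 1000000 in
theorem interior_zero (Om : Set ℂ) (hO : IsOpen Om) (hb : Bornology.IsBounded Om)
    (hsc : SimplyConnectedSpace Om) (μ : Measure ℂ) [μ.IsAddHaarMeasure]
    (V : ℂ → ℂ) (W : Set ℂ) (hW : IsOpen W) (hOW : closure Om ⊆ W) (hV : ContDiffOn ℝ 1 V W)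
    (hsym : ∀ z ∈ Om, ∀ x y, ⟪fderiv ℝ V z x, y⟫ = ⟪fderiv ℝ V z y, x⟫)
    (τ : ℝ) (htr : ∀ z ∈ Om, dvg V z = τ)
    (htan : ∀ z ∈ frontier Om, TanC (frontier Om) z (V z)) :
    τ = 0 ∧ ∀ z ∈ Om, V z = 0 := by
  have hcomp : IsCompact (closure Om) := hb.isCompact_closure
  have hfin : μ Om < ⊤ := hb.measure_lt_top
  have : IsFiniteMeasure (μ.restrict Om) := ⟨by simpa using hfin⟩
  have hDc : ContinuousOn (fderiv ℝ V) W := hV.continuousOn_fderiv_of_isOpen hW (by simp)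
  have hVd : ∀ x ∈ W, DifferentiableAt ℝ V x := fun x hx =>
    (hV.contDiffAt (hW.mem_nhds hx)).differentiableAt (by simp)
  obtain ⟨L, hL⟩ := hcomp.exists_bound_of_continuousOn (hDc.mono hOW)
  obtain ⟨B, hB⟩ := hcomp.exists_bound_of_continuousOn (hV.continuousOn.mono hOW)
  have hOmW : Om ⊆ W := subset_closure.trans hOW
  have hne : Om.Nonempty := Set.nonempty_coe_sort.1 inferInstance
  have hC : ∀ x ∈ Om, ∀ y ∉ Om, dist x y = Metric.infDist x Omᶜ →
      |⟪x - y, V x⟫| ≤ L * ‖x - y‖ ^ 2 := by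
    intro x hx y hy hxy
    have hr : dist x y ≠ 0 := by
      rw [dist_ne_zero]; rintro rfl; exact hy hx
    have h1 : Metric.closedBall x (dist x y) ⊆ closure Om := by
      rw [← closure_ball x hr]
      apply closure_mono
      rw [hxy]; exact Metric.ball_infDist_compl_subset
    have hyb : y ∈ Metric.closedBall x (dist x y) := by rw [Metric.mem_closedBall, dist_comm]
    have hxb : x ∈ Metric.closedBall x (dist x y) := Metric.mem_closedBall_self dist_nonneg
    have hyf : y ∈ frontier Om := ⟨h1 hyb, by rwa [hO.interior_eq]⟩
    have h2 : ⟪x - y, V y⟫ = 0 := by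
      refine tan_nearest (frontier Om) x y (V y) ?_ (htan y hyf)
      intro y' hy'
      rw [hxy]
      refine Metric.infDist_le_dist_of_mem ?_
      have := hy'.2
      rwa [hO.interior_eq] at this
    have h3 : ‖V x - V y‖ ≤ L * ‖x - y‖ :=
      Convex.norm_image_sub_le_of_norm_fderiv_le (𝕜 := ℝ) (s := Metric.closedBall x (dist x y))
        (fun z hz => hVd z (hOW (h1 hz))) (fun z hz => hL z (h1 hz)) (convex_closedBall _ _) hyb hxb
    have h4 : ⟪x - y, V x⟫ = ⟪x - y, V x - V y⟫ := by rw [inner_sub_right, h2, sub_zero]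
    rw [h4]
    refine (abs_real_inner_le_norm _ _).trans ?_
    have := norm_nonneg (x - y)
    nlinarith
  have hτ : τ = 0 := by
    have h1 := div_zero_aux Om hO hb μ V (hV.mono hOmW) L hC B (fun x hx => hB x (subset_closure hx))
      L (fun x hx => hL x (subset_closure hx))
    rw [setIntegral_congr_fun hO.measurableSet (g := fun _ => τ) (fun x hx => htr x hx)] at h1
    rw [setIntegral_const, smul_eq_mul, mul_eq_zero] at h1
    rcases h1 with h1 | h1
    · exfalso
      have h2 := hO.measure_pos μ hne
      rw [measureReal_def, ENNReal.toReal_eq_zero_iff] at h1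
      rcases h1 with h1 | h1
      · exact h2.ne' h1
      · exact hfin.ne h1
    · exact h1
  refine ⟨hτ, ?_⟩
  obtain ⟨φ, hφ⟩ := exists_potential Om hO hsc V (fun z hz => (hVd z (hOmW hz)).differentiableWithinAt) hsym
  have hφC : ContDiffOn ℝ 1 φ Om := by
    have := (contDiffOn_succ_iff_fderiv_of_isOpen (𝕜 := ℝ) (n := 0) (f := φ) hO).2
      ⟨fun z hz => (hφ z hz).differentiableAt.differentiableWithinAt, by simp, by
        rw [contDiffOn_zero]
        refine ContinuousOn.congr (f := fun z => innerSL ℝ (V z)) ?_ (fun z hz => (hφ z hz).fderiv)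
        exact (innerSL ℝ).continuous.comp_continuousOn (hV.continuousOn.mono hOmW)⟩
    simpa using this
  have hXf : ∀ z ∈ Om, HasFDerivAt (fun z => Real.arctan (φ z) • V z)
      (Real.arctan (φ z) • fderiv ℝ V z + ((1 / (1 + φ z ^ 2)) • innerSL ℝ (V z)).smulRight (V z)) z :=
    fun z hz => (hφ z hz).arctan.smul (hVd z (hOmW hz)).hasFDerivAt
  have hat : ∀ u : ℝ, |Real.arctan u| ≤ Real.pi / 2 := fun u =>
    abs_le.2 ⟨(Real.neg_pi_div_two_lt_arctan u).le, (Real.arctan_lt_pi_div_two u).le⟩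
  have hfr : ∀ u : ℝ, |1 / (1 + u ^ 2)| ≤ 1 := fun u => by
    rw [abs_of_nonneg (by positivity), div_le_one (by positivity)]
    nlinarith [sq_nonneg u]
  have hdv : ∀ z ∈ Om, dvg (fun z => Real.arctan (φ z) • V z) z = 1 / (1 + φ z ^ 2) * ‖V z‖ ^ 2 := by
    intro z hz
    have h1 := htr z hz
    rw [hτ] at h1
    unfold dvg at h1 ⊢
    rw [(hXf z hz).fderiv]
    simp only [_root_.add_apply, _root_.smul_apply, ContinuousLinearMap.smulRight_apply,
      innerSL_apply_apply, Complex.add_re, Complex.add_im, Complex.smul_re, Complex.smul_im,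
      smul_eq_mul, Complex.inner]
    rw [← Complex.normSq_eq_norm_sq, Complex.normSq_apply]
    simp
    linear_combination (Real.arctan (φ z)) * h1
  have h0 := div_zero_aux Om hO hb μ (fun z => Real.arctan (φ z) • V z)
    ((Real.contDiff_arctan.comp_contDiffOn hφC).smul (hV.mono hOmW)) (Real.pi / 2 * L)
    (by
      intro x hx y hy hxy
      have h1 := hC x hx y hy hxy
      rw [inner_smul_right, abs_mul, mul_assoc]
      exact mul_le_mul (hat _) h1 (abs_nonneg _) (by positivity))
    (Real.pi / 2 * B)
    (by
      intro x hx
      rw [norm_smul]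
      exact mul_le_mul (hat _) (hB x (subset_closure hx)) (norm_nonneg _) (by positivity))
    (Real.pi / 2 * L + 1 * B * B)
    (by
      intro x hx
      rw [(hXf x hx).fderiv]
      have hBx := hB x (subset_closure hx)
      have hB0 : 0 ≤ B := (norm_nonneg _).trans hBx
      refine (norm_add_le _ _).trans (add_le_add ?_ ?_)
      · rw [norm_smul]
        exact mul_le_mul (hat _) (hL x (subset_closure hx)) (norm_nonneg _) (by positivity)
      · rw [ContinuousLinearMap.norm_smulRight_apply, norm_smul, innerSL_apply_norm]
        exact mul_le_mul (mul_le_mul (hfr _) hBx (norm_nonneg _) zero_le_one) hBx (norm_nonneg _)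
          (by positivity))
  rw [setIntegral_congr_fun hO.measurableSet hdv] at h0
  have hcont : ContinuousOn (fun z => 1 / (1 + φ z ^ 2) * ‖V z‖ ^ 2) Om := by
    refine ContinuousOn.mul (ContinuousOn.div continuousOn_const
      (continuousOn_const.add (hφC.continuousOn.pow 2)) (fun z _ => by positivity))
      ((hV.continuousOn.mono hOmW).norm.pow 2)
  have hIntg : IntegrableOn (fun z => 1 / (1 + φ z ^ 2) * ‖V z‖ ^ 2) Om μ := by
    refine Integrable.of_bound (hcont.aestronglyMeasurable hO.measurableSet) (1 * B ^ 2) ?_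
    filter_upwards [ae_restrict_mem hO.measurableSet] with x hx
    rw [Real.norm_eq_abs, abs_mul]
    refine mul_le_mul (hfr _) ?_ (abs_nonneg _) zero_le_one
    rw [abs_of_nonneg (by positivity)]
    have := hB x (subset_closure hx)
    gcongr
  rw [setIntegral_eq_zero_iff_of_nonneg_ae (Eventually.of_forall fun z => by positivity) hIntg] at h0
  have h1 := Measure.eqOn_open_of_ae_eq h0 hO hcont continuousOn_const
  intro z hz
  have h2 := h1 hz
  simp only [Pi.zero_apply, mul_eq_zero] at h2
  rcases h2 with h2 | h2
  · have : 0 < 1 / (1 + φ z ^ 2) := by positivity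
    linarith
  · simpa using h2


theorem zero_of_closure (F : ℂ → ℝ) (S : Set ℂ) (p : ℂ) (hF : ContinuousAt F p)
    (h0 : ∀ z ∈ S, F z = 0) (hp : p ∈ closure S) : F p = 0 := by
  have := mem_closure_iff_nhdsWithin_neBot.1 hp
  refine tendsto_nhds_unique (f := F) (l := 𝓝[S] p) (hF.tendsto.mono_left nhdsWithin_le_nhds) ?_
  refine tendsto_const_nhds.congr' ?_
  filter_upwards [self_mem_nhdsWithin] with z hz using (h0 z hz).symm

theorem curve_zero (Γ : ℝ → ℂ) (hd : Differentiable ℝ Γ) (hper : Function.Periodic Γ (2 * Real.pi))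
    (hinj : InjOn Γ (Ico 0 (2 * Real.pi))) (hreg : ∀ t, deriv Γ t ≠ 0)
    (V : ℂ → ℂ) (hV : ∀ t, DifferentiableAt ℝ V (Γ t))
    (htan : ∀ t, TanC (range Γ) (Γ t) (V (Γ t)))
    (hker : ∀ t, fderiv ℝ V (Γ t) (V (Γ t)) = 0) (t : ℝ) :
    V (Γ t) = 0 ∧ fderiv ℝ V (Γ t) (deriv Γ t) = 0 := by
  have hP : ∀ t, HasDerivAt (fun t => V (Γ t)) (fderiv ℝ V (Γ t) (deriv Γ t)) t := fun t =>
    (hV t).hasFDerivAt.comp_hasDerivAt t (hd t).hasDerivAt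
  choose a ha using fun t => tan_parallel Γ hd hper hinj t (hreg t) _ (htan t)
  have hk : ∀ t, a t • fderiv ℝ V (Γ t) (deriv Γ t) = 0 := fun t => by
    rw [← map_smul, ← ha t]; exact hker t
  have hN : ∀ t, HasDerivAt (fun t => ‖V (Γ t)‖ ^ 2) 0 t := fun t => by
    have h := (hP t).norm_sq
    have h2 : ⟪V (Γ t), fderiv ℝ V (Γ t) (deriv Γ t)⟫ = 0 := by
      rw [ha t, inner_smul_left]
      have : ⟪deriv Γ t, a t • fderiv ℝ V (Γ t) (deriv Γ t)⟫ = 0 := by rw [hk t, inner_zero_right]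
      rw [inner_smul_right] at this
      simpa using this
    rw [h2, mul_zero] at h
    exact h
  have hconst : ∀ s s', ‖V (Γ s)‖ ^ 2 = ‖V (Γ s')‖ ^ 2 := fun s s' =>
    is_const_of_deriv_eq_zero (fun t => (hN t).differentiableAt) (fun t => (hN t).deriv) s s'
  have hall : ∀ t, V (Γ t) = 0 := by
    by_contra hcon
    push Not at hcon
    obtain ⟨s, hs⟩ := hcon
    have hne : ∀ t, V (Γ t) ≠ 0 := fun t ht => by
      have := hconst s t
      rw [ht] at this
      simp at this
      exact hs this
    have hP0 : ∀ t, fderiv ℝ V (Γ t) (deriv Γ t) = 0 := fun t => by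
      rcases smul_eq_zero.1 (hk t) with h | h
      · exact absurd (by rw [ha t, h, zero_smul]) (hne t)
      · exact h
    have hc : ∀ t, V (Γ t) = V (Γ s) := fun t =>
      is_const_of_deriv_eq_zero (f := fun t => V (Γ t)) (fun t => (hP t).differentiableAt)
        (fun t => by rw [(hP t).deriv, hP0 t]) t s
    exact hs (const_parallel Γ hd hper _ (fun t => ⟨a t, by rw [← hc t]; exact ha t⟩) hreg)
  refine ⟨hall t, ?_⟩
  have h := hP t
  simp only [hall] at h
  exact h.unique (hasDerivAt_const t 0)

set_option maxHeartbeats 1000000 in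
theorem exterior_zero (Γ : ℝ → ℂ) (hreg : ∀ t, deriv Γ t ≠ 0)
    (Om Op : Set ℂ) (hO : IsOpen Om) (hne : Om.Nonempty) (hfr : frontier Om = range Γ)
    (hOp : Op = (Om ∪ range Γ)ᶜ)
    (V : ℂ → ℂ) (W : Set ℂ) (hW : IsOpen W) (hOW : Op ∪ range Γ ⊆ W) (hV : ContDiffOn ℝ 1 V W)
    (hsym : ∀ z ∈ Op, ∀ x y, ⟪fderiv ℝ V z x, y⟫ = ⟪fderiv ℝ V z y, x⟫)
    (htr : ∀ z ∈ Op, dvg V z = 0)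
    (hz : ∀ t, V (Γ t) = 0 ∧ fderiv ℝ V (Γ t) (deriv Γ t) = 0) :
    ∀ z ∈ Op, V z = 0 := by
  classical
  have hcl : closure Om = Om ∪ range Γ := by
    rw [closure_eq_self_union_frontier, hfr]
  have hOpo : IsOpen Op := by rw [hOp, ← hcl]; exact isClosed_closure.isOpen_compl
  have hDc : ContinuousOn (fderiv ℝ V) W := hV.continuousOn_fderiv_of_isOpen hW (by simp)
  have hVd : ∀ x ∈ W, DifferentiableAt ℝ V x := fun x hx =>
    (hV.contDiffAt (hW.mem_nhds hx)).differentiableAt (by simp)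
  set G : ℂ → ℂ := fun z => if z ∈ Op then (starRingEnd ℂ) (V z) else 0 with hG
  have hsym' : ∀ z ∈ Op, (fderiv ℝ V z Complex.I).re - (fderiv ℝ V z 1).im = 0 := by
    intro z hz
    have := hsym z hz 1 Complex.I
    simp [Complex.inner] at this
    linarith
  have hOmG : ∀ z ∈ Om, G =ᶠ[𝓝 z] fun _ => 0 := by
    intro z hz
    filter_upwards [hO.mem_nhds hz] with y hy
    have : y ∉ Op := by rw [hOp]; simp [hy]
    simp [hG, this]
  have hdiff : Differentiable ℂ G := by
    intro z
    by_cases hzp : z ∈ Op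
    · have he : G =ᶠ[𝓝 z] fun y => Complex.conjCLE (V y) := by
        filter_upwards [hOpo.mem_nhds hzp] with y hy
        simp [hG, hy]
      rw [he.differentiableAt_iff, differentiableAt_complex_iff_differentiableAt_real]
      have hf := (Complex.conjCLE : ℂ ≃L[ℝ] ℂ).toContinuousLinearMap.hasFDerivAt.comp z
        (hVd z (hOW (Or.inl hzp))).hasFDerivAt
      refine ⟨hf.differentiableAt, ?_⟩
      have h1 := hsym' z hzp
      have h2 := htr z hzp
      unfold dvg at h2
      rw [show fderiv ℝ (fun y => Complex.conjCLE (V y)) z = _ from hf.fderiv]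
      apply Complex.ext
      · simp
        linarith
      · simp
        linarith
    · by_cases hzm : z ∈ Om
      · exact (hOmG z hzm).differentiableAt_iff.2 (differentiableAt_const _)
      · have hzr : z ∈ range Γ := by
          rw [hOp] at hzp
          simp only [mem_compl_iff, not_not] at hzp
          exact hzp.resolve_left hzm
        by_cases hzc : z ∈ closure Op
        · obtain ⟨t, rfl⟩ := hzr
          obtain ⟨hz0, hz1⟩ := hz t
          have hmW : Γ t ∈ W := hOW (Or.inr ⟨t, rfl⟩)
          have hca : ContinuousAt (fderiv ℝ V) (Γ t) := hDc.continuousAt (hW.mem_nhds hmW)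
          have c1 : ∀ v, ContinuousAt (fun z => fderiv ℝ V z v) (Γ t) := fun v =>
            hca.clm_apply continuousAt_const
          have e1 := zero_of_closure (fun z => (fderiv ℝ V z Complex.I).re - (fderiv ℝ V z 1).im) Op
            (Γ t) ((Complex.continuous_re.continuousAt.comp (c1 _)).sub
              (Complex.continuous_im.continuousAt.comp (c1 _))) hsym' hzc
          have e2 := zero_of_closure (dvg V) Op
            (Γ t) ((Complex.continuous_re.continuousAt.comp (c1 _)).add
              (Complex.continuous_im.continuousAt.comp (c1 _))) htr hzc
          simp only [dvg] at e1 e2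
          set D := fderiv ℝ V (Γ t) with hD
          set T := deriv Γ t with hT
          have hlin : ∀ v : ℂ, D v = v.re • D 1 + v.im • D Complex.I := fun v => by
            rw [← map_smul, ← map_smul, ← map_add]
            congr 1
            simp [Complex.re_add_im]
          have hn : 0 < T.re ^ 2 + T.im ^ 2 := by
            have := Complex.normSq_pos.2 (hreg t)
            rw [Complex.normSq_apply] at this
            nlinarith
          rw [hlin T] at hz1
          have r1 := congrArg Complex.re hz1
          have r2 := congrArg Complex.im hz1
          simp only [Complex.add_re, Complex.add_im, Complex.smul_re, Complex.smul_im, smul_eq_mul,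
            Complex.zero_re, Complex.zero_im] at r1 r2
          have a0 : (D 1).re = 0 := by
            have : (T.re ^ 2 + T.im ^ 2) * (D 1).re = 0 := by
              linear_combination T.re * r1 - T.im * r2 - T.re * T.im * e1 + T.im ^ 2 * e2
            exact (mul_eq_zero.1 this).resolve_left hn.ne'
          have b0 : (D 1).im = 0 := by
            have : (T.re ^ 2 + T.im ^ 2) * (D 1).im = 0 := by
              linear_combination T.im * r1 + T.re * r2 - T.im ^ 2 * e1 - T.re * T.im * e2
            exact (mul_eq_zero.1 this).resolve_left hn.ne'
          have hD1 : D 1 = 0 := Complex.ext a0 b0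
          have hDI : D Complex.I = 0 := Complex.ext (by simp; linarith) (by simp; linarith)
          have hD0 : D = 0 := by
            ext v
            rw [hlin]; simp [hD1, hDI]
          have hf := (hVd _ hmW).hasFDerivAt
          rw [← hD, hD0, hasFDerivAt_iff_isLittleO] at hf
          have hg : HasDerivAt G 0 (Γ t) := by
            rw [hasDerivAt_iff_isLittleO]
            refine Asymptotics.IsBigO.trans_isLittleO ?_ hf
            refine Asymptotics.IsBigO.of_bound 1 (Eventually.of_forall fun y => ?_)
            have : G (Γ t) = 0 := by simp only [hG, if_neg hzp]
            rw [this, hz0]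
            simp only [hG]
            split_ifs <;> simp
          exact hg.differentiableAt
        · have he : G =ᶠ[𝓝 z] fun _ => 0 := by
            filter_upwards [isClosed_closure.isOpen_compl.mem_nhds hzc] with y hy
            have : y ∉ Op := fun h => hy (subset_closure h)
            simp [hG, this]
          exact he.differentiableAt_iff.2 (differentiableAt_const _)
  obtain ⟨z0, hz0⟩ := hne
  have han : AnalyticOnNhd ℂ G univ := fun z _ => hdiff.analyticAt z
  have hzero := han.eqOn_of_preconnected_of_eventuallyEq (analyticOnNhd_const (v := (0:ℂ)))
    isPreconnected_univ (mem_univ z0) (hOmG z0 hz0)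
  intro z hz
  have := hzero (mem_univ z)
  simpa [hG, hz] using this

theorem core (Γ : ℝ → ℂ) (hd : Differentiable ℝ Γ) (hper : Function.Periodic Γ (2 * Real.pi))
    (hinj : InjOn Γ (Ico 0 (2 * Real.pi))) (hreg : ∀ t, deriv Γ t ≠ 0)
    (Om Op : Set ℂ) (hO : IsOpen Om) (hb : Bornology.IsBounded Om)
    (hsc : SimplyConnectedSpace Om) (hfr : frontier Om = range Γ)
    (hOp : Op = (Om ∪ range Γ)ᶜ) (Vm Vp : ℂ → ℂ)
    (Wm : Set ℂ) (hWm : IsOpen Wm) (hOWm : Om ∪ range Γ ⊆ Wm) (hVm : ContDiffOn ℝ 1 Vm Wm)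
    (Wp : Set ℂ) (hWp : IsOpen Wp) (hOWp : Op ∪ range Γ ⊆ Wp) (hVp : ContDiffOn ℝ 1 Vp Wp)
    (hsymm : ∀ z ∈ Om, ∀ x y, ⟪fderiv ℝ Vm z x, y⟫ = ⟪fderiv ℝ Vm z y, x⟫)
    (hsymp : ∀ z ∈ Op, ∀ x y, ⟪fderiv ℝ Vp z x, y⟫ = ⟪fderiv ℝ Vp z y, x⟫)
    (τ : ℝ) (htrm : ∀ z ∈ Om, dvg Vm z = τ) (htrp : ∀ z ∈ Op, dvg Vp z = τ)
    (htanm : ∀ t, TanC (range Γ) (Γ t) (Vm (Γ t)))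
    (htanp : ∀ t, TanC (range Γ) (Γ t) (Vp (Γ t)))
    (hker : ∀ t, (fderiv ℝ Vp (Γ t) + fderiv ℝ Vm (Γ t)) (Vp (Γ t) - Vm (Γ t)) = 0) :
    τ = 0 ∧ (∀ z ∈ Om, Vm z = 0) ∧ (∀ z ∈ Op, Vp z = 0) := by
  have hcl : closure Om = Om ∪ range Γ := by
    rw [closure_eq_self_union_frontier, hfr]
  have hne : Om.Nonempty := Set.nonempty_coe_sort.1 inferInstance
  obtain ⟨hτ, hm⟩ := interior_zero Om hO hb hsc Measure.addHaar Vm Wm hWm (by rwa [hcl]) hVm hsymm τ htrm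
    (by rw [hfr]; rintro z ⟨t, rfl⟩; exact htanm t)
  refine ⟨hτ, hm, ?_⟩
  have hDm : ∀ z ∈ Om, fderiv ℝ Vm z = 0 := fun z hz => by
    have : Vm =ᶠ[𝓝 z] fun _ => 0 := by
      filter_upwards [hO.mem_nhds hz] with y hy using hm y hy
    rw [this.fderiv_eq]; simp
  have hmem : ∀ t, Γ t ∈ Wm := fun t => hOWm (Or.inr ⟨t, rfl⟩)
  have hmc : ∀ t, Γ t ∈ closure Om := fun t => by rw [hcl]; exact Or.inr ⟨t, rfl⟩
  have hVm0 : ∀ t, Vm (Γ t) = 0 := fun t => by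
    have := zero_of_closure (fun z => ‖Vm z‖) Om (Γ t)
      ((hVm.continuousOn.continuousAt (hWm.mem_nhds (hmem t))).norm) (fun z hz => by simp [hm z hz]) (hmc t)
    simpa using this
  have hDm0 : ∀ t, fderiv ℝ Vm (Γ t) = 0 := fun t => by
    have := zero_of_closure (fun z => ‖fderiv ℝ Vm z‖) Om (Γ t)
      (((hVm.continuousOn_fderiv_of_isOpen hWm (by simp)).continuousAt (hWm.mem_nhds (hmem t))).norm)
      (fun z hz => by simp [hDm z hz]) (hmc t)
    simpa using this
  have hz := curve_zero Γ hd hper hinj hreg Vp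
    (fun t => (hVp.contDiffAt (hWp.mem_nhds (hOWp (Or.inr ⟨t, rfl⟩)))).differentiableAt (by simp)) htanp
    (fun t => by have := hker t; rwa [hVm0, hDm0, add_zero, sub_zero] at this)
  exact exterior_zero Γ hreg Om Op hO hne hfr hOp Vp Wp hWp hOWp hVp hsymp
    (fun z hz => by rw [htrp z hz, hτ]) hz


/-- horizontal projection -/
noncomputable def piC : E3 →L[ℝ] ℂ :=
  (EuclideanSpace.proj (𝕜 := ℝ) (0 : Fin 3)).smulRight (1:ℂ) +
    (EuclideanSpace.proj (𝕜 := ℝ) (1 : Fin 3)).smulRight Complex.I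

/-- horizontal inclusion -/
noncomputable def jC : ℂ →L[ℝ] E3 :=
  Complex.reCLM.smulRight (e3 0) + Complex.imCLM.smulRight (e3 1)

/-- horizontal part of the gradient of the quadratic form -/
noncomputable def aC (Q : Matrix (Fin 3) (Fin 3) ℝ) : ℂ →L[ℝ] ℂ :=
  Complex.reCLM.smulRight (⟨2 * Q 0 0, 2 * Q 0 1⟩ : ℂ) +
    Complex.imCLM.smulRight (⟨2 * Q 0 1, 2 * Q 1 1⟩ : ℂ)

/-- remaining part of the gradient of the quadratic form -/
noncomputable def bC (Q : Matrix (Fin 3) (Fin 3) ℝ) : E3 →L[ℝ] E3 :=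
  (EuclideanSpace.proj (𝕜 := ℝ) (2 : Fin 3)).smulRight (mk3 (2 * Q 0 2) (2 * Q 1 2) (2 * Q 2 2)) +
    (EuclideanSpace.proj (𝕜 := ℝ) (0 : Fin 3)).smulRight (mk3 0 0 (2 * Q 0 2)) +
    (EuclideanSpace.proj (𝕜 := ℝ) (1 : Fin 3)).smulRight (mk3 0 0 (2 * Q 1 2))

/-- the planar field in complex form -/
noncomputable def vC (v : ℝ × ℝ → ℝ × ℝ) (Q : Matrix (Fin 3) (Fin 3) ℝ) (z : ℂ) : ℂ :=
  Complex.equivRealProdCLM.symm (v (Complex.equivRealProdCLM z)) + aC Q z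

theorem mk3_apply0 (a b c : ℝ) : mk3 a b c 0 = a := rfl
theorem mk3_apply1 (a b c : ℝ) : mk3 a b c 1 = b := rfl
theorem mk3_apply2 (a b c : ℝ) : mk3 a b c 2 = c := rfl

theorem piC_apply (p : E3) : piC p = ⟨p 0, p 1⟩ := by
  apply Complex.ext <;> simp [piC]

theorem jC_apply (z : ℂ) : jC z = mk3 z.re z.im 0 := by
  ext i; fin_cases i <;> simp [jC, e3, mk3_apply0, mk3_apply1, mk3_apply2]

theorem aC_apply (Q : Matrix (Fin 3) (Fin 3) ℝ) (z : ℂ) :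
    aC Q z = ⟨2 * (Q 0 0 * z.re + Q 0 1 * z.im), 2 * (Q 0 1 * z.re + Q 1 1 * z.im)⟩ := by
  apply Complex.ext <;> simp [aC] <;> ring

theorem bC_apply (Q : Matrix (Fin 3) (Fin 3) ℝ) (p : E3) :
    bC Q p = mk3 (2 * Q 0 2 * p 2) (2 * Q 1 2 * p 2)
      (2 * (Q 0 2 * p 0 + Q 1 2 * p 1 + Q 2 2 * p 2)) := by
  ext i; fin_cases i <;> simp [bC, mk3_apply0, mk3_apply1, mk3_apply2] <;> ring

theorem grad3_quad (q : E3 → ℝ) (Q : Matrix (Fin 3) (Fin 3) ℝ) (hQ : Q.IsSymm)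
    (hq : ∀ p : E3, q p = ∑ i, ∑ j, Q i j * p i * p j) (p : E3) :
    grad3 q p = jC (aC Q (piC p)) + bC Q p := by
  have hqf : q = fun p : E3 => ∑ i, ∑ j, Q i j * p i * p j := funext hq
  have hpr : ∀ i : Fin 3, HasFDerivAt (fun p : E3 => p i) (EuclideanSpace.proj (𝕜 := ℝ) i) p :=
    fun i => (EuclideanSpace.proj (𝕜 := ℝ) i).hasFDerivAt
  have hf := HasFDerivAt.fun_sum (u := Finset.univ) (fun i _ => HasFDerivAt.fun_sum (u := Finset.univ)
    (fun j _ => ((hpr i).const_mul (Q i j)).mul (hpr j)))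
  have h01 : Q 1 0 = Q 0 1 := hQ.apply 0 1
  have h02 : Q 2 0 = Q 0 2 := hQ.apply 0 2
  have h12 : Q 2 1 = Q 1 2 := hQ.apply 1 2
  have hfd := HasFDerivAt.fderiv (f := q) (hf.congr_of_eventuallyEq (Eventually.of_forall (fun y => by simp [hq])))
  have hg : ∀ i, grad3 q p i = fderiv ℝ q p (e3 i) := fun i => rfl
  ext i
  rw [hg, hfd, jC_apply, aC_apply, piC_apply, bC_apply]
  fin_cases i <;>
  simp [Fin.sum_univ_three, e3, mk3_apply0, mk3_apply1, mk3_apply2, h01, h02, h12] <;> ring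

theorem u_eq (v : ℝ × ℝ → ℝ × ℝ) (q : E3 → ℝ) (Q : Matrix (Fin 3) (Fin 3) ℝ) (hQ : Q.IsSymm)
    (hq : ∀ p : E3, q p = ∑ i, ∑ j, Q i j * p i * p j) (u : E3 → E3)
    (hu : ∀ p : E3, u p = mk3 (v (p 0, p 1)).1 (v (p 0, p 1)).2 0 + grad3 q p) (p : E3) :
    u p = jC (vC v Q (piC p)) + bC Q p := by
  rw [hu, grad3_quad q Q hQ hq, vC, map_add, add_assoc]
  congr 1
  rw [jC_apply, piC_apply]
  simp

theorem u_deriv (v : ℝ × ℝ → ℝ × ℝ) (Q : Matrix (Fin 3) (Fin 3) ℝ) (u : E3 → E3)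
    (hu : ∀ p, u p = jC (vC v Q (piC p)) + bC Q p) (p : E3) (hd : DifferentiableAt ℝ (vC v Q) (piC p)) :
    fderiv ℝ u p = (jC.comp ((fderiv ℝ (vC v Q) (piC p)).comp piC)) + bC Q := by
  have : u = fun p => jC (vC v Q (piC p)) + bC Q p := funext hu
  rw [this]
  exact ((jC.hasFDerivAt.comp p (hd.hasFDerivAt.comp p piC.hasFDerivAt)).add (bC Q).hasFDerivAt).fderiv

theorem u_tan (σ : Set (ℝ × ℝ)) (S : Set E3) (hS : S = {p : E3 | (p 0, p 1) ∈ σ})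
    (p w : E3) (h : IsTangentAt S p w) : TanC (Complex.equivRealProdCLM ⁻¹' σ) (piC p) (piC w) := by
  obtain ⟨c, hc, hc0, hcd⟩ := h
  refine ⟨fun s => piC (c s), fun s => ?_, by simp [hc0], piC.hasFDerivAt.comp_hasDerivAt 0 hcd⟩
  have := hc s
  rw [hS] at this
  change Complex.equivRealProdCLM (piC (c s)) ∈ σ
  rw [piC_apply]
  simpa using this

theorem div_planar (v : ℝ × ℝ → ℝ × ℝ) (Q : Matrix (Fin 3) (Fin 3) ℝ) (u : E3 → E3)
    (hu : ∀ p, u p = jC (vC v Q (piC p)) + bC Q p) (p : E3) (hd : DifferentiableAt ℝ (vC v Q) (piC p))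
    (hdiv : div3 u p = 0) : dvg (vC v Q) (piC p) = - (2 * Q 2 2) := by
  unfold div3 pder at hdiv
  rw [u_deriv v Q u hu p hd] at hdiv
  have h0 : piC (e3 0) = 1 := by rw [piC_apply]; apply Complex.ext <;> simp [e3]
  have h1 : piC (e3 1) = Complex.I := by rw [piC_apply]; apply Complex.ext <;> simp [e3]
  simp [Fin.sum_univ_three, jC_apply, bC_apply, mk3_apply0, mk3_apply1, mk3_apply2, h0, h1] at hdiv
  simp [e3] at hdiv
  unfold dvg
  linarith

theorem curl_planar (v : ℝ × ℝ → ℝ × ℝ) (Q : Matrix (Fin 3) (Fin 3) ℝ) (u : E3 → E3)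
    (hu : ∀ p, u p = jC (vC v Q (piC p)) + bC Q p) (p : E3) (hd : DifferentiableAt ℝ (vC v Q) (piC p))
    (hcurl : curl3 u p = 0) (x y : ℂ) :
    ⟪fderiv ℝ (vC v Q) (piC p) x, y⟫ = ⟪fderiv ℝ (vC v Q) (piC p) y, x⟫ := by
  have hc := congrArg (fun w : E3 => w 2) hcurl
  simp only [curl3, mk3_apply2, pder] at hc
  rw [u_deriv v Q u hu p hd] at hc
  have h0 : piC (e3 0) = 1 := by rw [piC_apply]; apply Complex.ext <;> simp [e3]
  have h1 : piC (e3 1) = Complex.I := by rw [piC_apply]; apply Complex.ext <;> simp [e3]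
  simp [jC_apply, bC_apply, mk3_apply0, mk3_apply1, mk3_apply2, h0, h1] at hc
  simp [e3] at hc
  set D := fderiv ℝ (vC v Q) (piC p)
  have hlin : ∀ v : ℂ, D v = v.re • D 1 + v.im • D Complex.I := fun v => by
    rw [← map_smul, ← map_smul, ← map_add]
    congr 1
    simp [Complex.re_add_im]
  rw [hlin x, hlin y]
  simp [Complex.inner]
  linear_combination (x.re * y.im - y.re * x.im) * hc

theorem lin_bdd_zero (T : ℂ →L[ℝ] ℝ × ℝ) (M R : ℝ) (h : ∀ z : ℂ, R < ‖z‖ → ‖T z‖ ≤ M) (z : ℂ) :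
    T z = 0 := by
  by_contra hne
  have hz : z ≠ 0 := by rintro rfl; simp at hne
  have h1 : 0 < ‖z‖ := norm_pos_iff.2 hz
  have h2 : 0 < ‖T z‖ := norm_pos_iff.2 hne
  obtain ⟨n, hn⟩ := exists_nat_gt (max (R / ‖z‖) (M / ‖T z‖))
  have h3 := (le_max_left _ _).trans_lt hn
  have h4 := (le_max_right _ _).trans_lt hn
  rw [div_lt_iff₀ h1] at h3
  rw [div_lt_iff₀ h2] at h4
  have := h ((n:ℝ) • z) (by rw [norm_smul]; simpa using h3)
  rw [map_smul, norm_smul] at this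
  simp at this
  linarith


/-- Let `σ ⊂ ℝ²` be a smooth simple closed curve, `Ωm` the bounded simply
connected domain it encloses, `Ωp` the exterior, `S = σ × ℝ ⊂ ℝ³` the cylinder over `σ`.
Let `vm : Ωm → ℝ²`, `vp : Ωp → ℝ²` be bounded vector fields, C¹ up to `σ`, and
`q : ℝ³ → ℝ` a harmonic homogeneous quadratic polynomial such that the three-dimensional
fields `u± = (v±, 0) + ∇q` are divergence-free, curl-free on `Ω± × ℝ` and tangent to `S`,
and such that at every point of `S` the vector `u₊ − u₋` lies in the kernel of
`Du₊ + Du₋`.  Then `vp ≡ 0`, `vm ≡ 0` and `q ≡ 0`. -/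
theorem statement11
    (γ : ℝ → ℝ × ℝ)
    (hγsmooth : ContDiff ℝ (⊤ : ℕ∞) γ)
    (hγper : ∀ t, γ (t + 2 * Real.pi) = γ t)
    (hγinj : Set.InjOn γ (Set.Ico 0 (2 * Real.pi)))
    (hγreg : ∀ t, deriv γ t ≠ 0)
    (σset : Set (ℝ × ℝ)) (hσ : σset = Set.range γ)
    (Ωm Ωp : Set (ℝ × ℝ))
    (hΩmo : IsOpen Ωm) (hΩmb : Bornology.IsBounded Ωm)
    (hΩmsc : SimplyConnectedSpace Ωm)
    (hfr : frontier Ωm = σset)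
    (hΩp : Ωp = (Ωm ∪ σset)ᶜ)
    (S : Set E3) (hS : S = {p : E3 | (p 0, p 1) ∈ σset})
    (vm vp : ℝ × ℝ → ℝ × ℝ)
    (hvmB : ∃ M, ∀ x ∈ Ωm, ‖vm x‖ ≤ M)
    (hvpB : ∃ M, ∀ x ∈ Ωp, ‖vp x‖ ≤ M)
    (hvmC1 : ∃ W, IsOpen W ∧ Ωm ∪ σset ⊆ W ∧ ContDiffOn ℝ 1 vm W)
    (hvpC1 : ∃ W, IsOpen W ∧ Ωp ∪ σset ⊆ W ∧ ContDiffOn ℝ 1 vp W)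
    (q : E3 → ℝ)
    (hq : ∃ Q : Matrix (Fin 3) (Fin 3) ℝ, Q.IsSymm ∧ Matrix.trace Q = 0 ∧
      ∀ p : E3, q p = ∑ i, ∑ j, Q i j * p i * p j)
    (um up : E3 → E3)
    (hum : ∀ p : E3, um p = mk3 (vm (p 0, p 1)).1 (vm (p 0, p 1)).2 0 + grad3 q p)
    (hup : ∀ p : E3, up p = mk3 (vp (p 0, p 1)).1 (vp (p 0, p 1)).2 0 + grad3 q p)
    -- (b) divergence-free, curl-free, tangent to the cylinder
    (hdivm : ∀ p : E3, (p 0, p 1) ∈ Ωm → div3 um p = 0)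
    (hdivp : ∀ p : E3, (p 0, p 1) ∈ Ωp → div3 up p = 0)
    (hcurlm : ∀ p : E3, (p 0, p 1) ∈ Ωm → curl3 um p = 0)
    (hcurlp : ∀ p : E3, (p 0, p 1) ∈ Ωp → curl3 up p = 0)
    (htm : ∀ p ∈ S, IsTangentAt S p (um p))
    (htp : ∀ p ∈ S, IsTangentAt S p (up p))
    -- (c) kernel condition on the cylinder
    (hker : ∀ p ∈ S, (fderiv ℝ up p + fderiv ℝ um p) (up p - um p) = 0) :
    (∀ x ∈ Ωp, vp x = 0) ∧ (∀ x ∈ Ωm, vm x = 0) ∧ (∀ p : E3, q p = 0) := by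
  obtain ⟨Q, hQ, htr, hq⟩ := hq
  have hum' := u_eq vm q Q hQ hq um hum
  have hup' := u_eq vp q Q hQ hq up hup
  clear hum hup
  obtain ⟨Γ, hΓ⟩ : ∃ Γ : ℝ → ℂ, Γ = fun t => Complex.equivRealProdCLM.symm (γ t) := ⟨_, rfl⟩
  have heΓ : ∀ t, Complex.equivRealProdCLM (Γ t) = γ t := fun t => by simp [hΓ]
  have hγd : Differentiable ℝ γ := hγsmooth.differentiable (by simp)
  have hΓd : ∀ t, HasDerivAt Γ (Complex.equivRealProdCLM.symm (deriv γ t)) t := fun t => by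
    rw [hΓ]
    exact (Complex.equivRealProdCLM.symm : ℝ × ℝ →L[ℝ] ℂ).hasFDerivAt.comp_hasDerivAt t
      (hγd t).hasDerivAt
  have hd : Differentiable ℝ Γ := fun t => (hΓd t).differentiableAt
  have hper : Function.Periodic Γ (2 * Real.pi) := fun t => by simp [hΓ, hγper]
  have hinj : InjOn Γ (Ico 0 (2 * Real.pi)) := fun s hs t ht h => hγinj hs ht (by
    rw [← heΓ s, ← heΓ t, h])
  have hreg : ∀ t, deriv Γ t ≠ 0 := fun t => by
    rw [(hΓd t).deriv]
    simpa using hγreg t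
  have hrange : Complex.equivRealProdCLM ⁻¹' σset = range Γ := by
    ext z
    rw [hσ]
    constructor
    · rintro ⟨t, ht⟩
      exact ⟨t, by rw [hΓ]; exact (congrArg _ ht).trans (Complex.equivRealProdCLM.symm_apply_apply z)⟩
    · rintro ⟨t, rfl⟩
      exact ⟨t, (heΓ t).symm⟩
  have hcont : Continuous Complex.equivRealProdCLM := Complex.equivRealProdCLM.continuous
  have hO : IsOpen (Complex.equivRealProdCLM ⁻¹' Ωm) := hΩmo.preimage hcont
  have hb : Bornology.IsBounded (Complex.equivRealProdCLM ⁻¹' Ωm) := by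
    have h1 := (Complex.equivRealProdCLM.symm : ℝ × ℝ →L[ℝ] ℂ).lipschitz.isBounded_image hΩmb
    refine h1.subset fun z hz => ⟨Complex.equivRealProdCLM z, hz, Complex.equivRealProdCLM.symm_apply_apply z⟩
  have hsc : SimplyConnectedSpace (Complex.equivRealProdCLM ⁻¹' Ωm) := by
    have h : (Complex.equivRealProdCLM ⁻¹' Ωm : Set ℂ) ≃ₜ Ωm :=
      Complex.equivRealProdCLM.toHomeomorph.subtype (fun z => Iff.rfl)
    exact h.toHomotopyEquiv.simplyConnectedSpace
  have hfrC : frontier (Complex.equivRealProdCLM ⁻¹' Ωm) = range Γ := by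
    rw [← hrange, ← hfr]
    exact (Complex.equivRealProdCLM.toHomeomorph.preimage_frontier Ωm).symm
  have hOp : Complex.equivRealProdCLM ⁻¹' Ωp = (Complex.equivRealProdCLM ⁻¹' Ωm ∪ range Γ)ᶜ := by
    rw [← hrange, hΩp]; rfl
  have hC1 : ∀ (v : ℝ × ℝ → ℝ × ℝ) (W : Set (ℝ × ℝ)), ContDiffOn ℝ 1 v W →
      ContDiffOn ℝ 1 (vC v Q) (Complex.equivRealProdCLM ⁻¹' W) := by
    intro v W hv
    exact ((Complex.equivRealProdCLM.symm.contDiff).comp_contDiffOn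
      (hv.comp Complex.equivRealProdCLM.contDiff.contDiffOn (fun z hz => hz))).add
      (aC Q).contDiff.contDiffOn
  obtain ⟨Wm, hWm, hOWm, hvm⟩ := hvmC1
  obtain ⟨Wp, hWp, hOWp, hvp⟩ := hvpC1
  have hWmC := hWm.preimage hcont
  have hWpC := hWp.preimage hcont
  have hVm := hC1 vm Wm hvm
  have hVp := hC1 vp Wp hvp
  have hOWmC : Complex.equivRealProdCLM ⁻¹' Ωm ∪ range Γ ⊆ Complex.equivRealProdCLM ⁻¹' Wm := by
    rw [← hrange, ← preimage_union]; exact preimage_mono hOWm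
  have hOWpC : Complex.equivRealProdCLM ⁻¹' Ωp ∪ range Γ ⊆ Complex.equivRealProdCLM ⁻¹' Wp := by
    rw [← hrange, ← preimage_union]; exact preimage_mono hOWp
  have hdm : ∀ z ∈ Complex.equivRealProdCLM ⁻¹' Ωm ∪ range Γ, DifferentiableAt ℝ (vC vm Q) z :=
    fun z hz => (hVm.differentiableOn (by simp)).differentiableAt (hWmC.mem_nhds (hOWmC hz))
  have hdp : ∀ z ∈ Complex.equivRealProdCLM ⁻¹' Ωp ∪ range Γ, DifferentiableAt ℝ (vC vp Q) z :=
    fun z hz => (hVp.differentiableOn (by simp)).differentiableAt (hWpC.mem_nhds (hOWpC hz))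
  have hpi : ∀ (z : ℂ) (s : ℝ), piC (mk3 z.re z.im s) = z := fun z s => by
    rw [piC_apply]; rfl
  have hcoord : ∀ (z : ℂ) (s : ℝ), (mk3 z.re z.im s 0, mk3 z.re z.im s 1) =
      Complex.equivRealProdCLM z := fun z s => rfl
  have hmemS : ∀ (t : ℝ) (s : ℝ), mk3 (Γ t).re (Γ t).im s ∈ S := fun t s => by
    rw [hS, mem_ofPred_eq, hcoord, heΓ, hσ]; exact ⟨t, rfl⟩
  have hpij : ∀ z, piC (jC z) = z := fun z => by rw [jC_apply, hpi]
  have hpb : ∀ p : E3, piC (bC Q p) = p 2 • (⟨2 * Q 0 2, 2 * Q 1 2⟩ : ℂ) := fun p => by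
    rw [piC_apply, bC_apply, mk3_apply0, mk3_apply1]
    apply Complex.ext <;> simp <;> ring
  have htanm' : ∀ t s : ℝ, TanC (range Γ) (Γ t) (vC vm Q (Γ t) + s • (⟨2 * Q 0 2, 2 * Q 1 2⟩ : ℂ)) := by
    intro t s
    have h := u_tan σset S hS _ _ (htm _ (hmemS t s))
    rwa [hrange, hpi, hum', map_add, hpij, hpb, hpi, mk3_apply2] at h
  have htanp' : ∀ t s : ℝ, TanC (range Γ) (Γ t) (vC vp Q (Γ t) + s • (⟨2 * Q 0 2, 2 * Q 1 2⟩ : ℂ)) := by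
    intro t s
    have h := u_tan σset S hS _ _ (htp _ (hmemS t s))
    rwa [hrange, hpi, hup', map_add, hpij, hpb, hpi, mk3_apply2] at h
  have hw : (⟨2 * Q 0 2, 2 * Q 1 2⟩ : ℂ) = 0 := by
    refine const_parallel Γ hd hper _ (fun t => ?_) hreg
    obtain ⟨a, ha⟩ := tan_parallel Γ hd hper hinj t (hreg t) _ (htanm' t 0)
    obtain ⟨b, hb⟩ := tan_parallel Γ hd hper hinj t (hreg t) _ (htanm' t 1)
    refine ⟨b - a, ?_⟩
    rw [sub_smul, ← ha, ← hb]
    simp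
  have hcore := core Γ hd hper hinj hreg _ _ hO hb hsc hfrC hOp (vC vm Q) (vC vp Q)
    _ hWmC hOWmC hVm _ hWpC hOWpC hVp
    (fun z hz x y => by
      have h := curl_planar vm Q um hum' (mk3 z.re z.im 0) (by rw [hpi]; exact hdm z (Or.inl hz))
        (hcurlm _ hz) x y
      rwa [hpi] at h)
    (fun z hz x y => by
      have h := curl_planar vp Q up hup' (mk3 z.re z.im 0) (by rw [hpi]; exact hdp z (Or.inl hz))
        (hcurlp _ hz) x y
      rwa [hpi] at h)
    (-(2 * Q 2 2))
    (fun z hz => by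
      have h := div_planar vm Q um hum' (mk3 z.re z.im 0) (by rw [hpi]; exact hdm z (Or.inl hz))
        (hdivm _ hz)
      rwa [hpi] at h)
    (fun z hz => by
      have h := div_planar vp Q up hup' (mk3 z.re z.im 0) (by rw [hpi]; exact hdp z (Or.inl hz))
        (hdivp _ hz)
      rwa [hpi] at h)
    (fun t => by simpa using htanm' t 0)
    (fun t => by simpa using htanp' t 0)
    (fun t => by
      have h := hker _ (hmemS t 0)
      rw [u_deriv vm Q um hum' _ (by rw [hpi]; exact hdm _ (Or.inr ⟨t, rfl⟩)),
        u_deriv vp Q up hup' _ (by rw [hpi]; exact hdp _ (Or.inr ⟨t, rfl⟩)),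
        hum', hup', hpi, add_sub_add_right_eq_sub, ← map_sub] at h
      have h2 := congrArg piC h
      simp only [add_apply, ContinuousLinearMap.comp_apply,
        map_add, hpij, hpb, hw, smul_zero, add_zero, map_zero] at h2
      simpa using h2)
  obtain ⟨hτ, hm0, hp0⟩ := hcore
  have h22 : Q 2 2 = 0 := by linarith
  have h02 : Q 0 2 = 0 := by have := congrArg Complex.re hw; simpa using this
  have h12 : Q 1 2 = 0 := by have := congrArg Complex.im hw; simpa using this
  have hvp0 : ∀ z ∈ Complex.equivRealProdCLM ⁻¹' Ωp,
      vp (Complex.equivRealProdCLM z) = - Complex.equivRealProdCLM (aC Q z) := by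
    intro z hz
    have h := congrArg Complex.equivRealProdCLM (hp0 z hz)
    rw [vC, map_add, ContinuousLinearEquiv.apply_symm_apply, map_zero] at h
    exact eq_neg_of_add_eq_zero_left h
  have hvm0 : ∀ z ∈ Complex.equivRealProdCLM ⁻¹' Ωm,
      vm (Complex.equivRealProdCLM z) = - Complex.equivRealProdCLM (aC Q z) := by
    intro z hz
    have h := congrArg Complex.equivRealProdCLM (hm0 z hz)
    rw [vC, map_add, ContinuousLinearEquiv.apply_symm_apply, map_zero] at h
    exact eq_neg_of_add_eq_zero_left h
  obtain ⟨M, hM⟩ := hvpB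
  obtain ⟨R, hR⟩ := hb.closure.subset_closedBall 0
  have hout : ∀ z : ℂ, R < ‖z‖ → z ∈ Complex.equivRealProdCLM ⁻¹' Ωp := by
    intro z hz
    rw [hOp]
    intro hz'
    have hzc : z ∈ closure (Complex.equivRealProdCLM ⁻¹' Ωm) := by
      rcases hz' with h | h
      · exact subset_closure h
      · rw [← hfrC] at h; exact frontier_subset_closure h
    have := hR hzc
    rw [mem_closedBall_zero_iff] at this
    linarith
  have haz : ∀ z, Complex.equivRealProdCLM (aC Q z) = 0 := by
    intro z
    refine lin_bdd_zero ((Complex.equivRealProdCLM : ℂ →L[ℝ] ℝ × ℝ).comp (aC Q)) M R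
      (fun z hz => ?_) z
    have h := hM _ (hout z hz)
    rw [hvp0 z (hout z hz), norm_neg] at h
    exact h
  have ha1 := haz 1
  have haI := haz Complex.I
  rw [aC_apply] at ha1 haI
  simp at ha1 haI
  obtain ⟨h00, h01⟩ := ha1
  obtain ⟨-, h11⟩ := haI
  have h10 : Q 1 0 = 0 := (hQ.apply 0 1).trans h01
  have h20 : Q 2 0 = 0 := (hQ.apply 0 2).trans h02
  have h21 : Q 2 1 = 0 := (hQ.apply 1 2).trans h12
  refine ⟨fun x hx => ?_, fun x hx => ?_, fun p => ?_⟩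
  · have h := hvp0 (Complex.equivRealProdCLM.symm x) (by
      rw [mem_preimage, ContinuousLinearEquiv.apply_symm_apply]; exact hx)
    rwa [ContinuousLinearEquiv.apply_symm_apply, haz, neg_zero] at h
  · have h := hvm0 (Complex.equivRealProdCLM.symm x) (by
      rw [mem_preimage, ContinuousLinearEquiv.apply_symm_apply]; exact hx)
    rwa [ContinuousLinearEquiv.apply_symm_apply, haz, neg_zero] at h
  · rw [hq]
    simp [Fin.sum_univ_three, h00, h01, h02, h10, h11, h12, h20, h21, h22]
end
end

section
/- Let 0 < a < b < c and let X = (X₁, X₂, X₃) be a random vector with the standard Gaussian law on ℝ³ (density (2π)^{−3/2} e^{−|u|²/2}). Then the tail of the quadratic form a X₁² + b X₂² + c X₃² satisfies lim_{Γ→∞} √Γ · e^{Γ/c} · ℙ( a X₁² + b X₂² + c X₃² ≥ 2Γ ) = c^{3/2} / √( π (c − a)(c − b) ). In particular the probability tail decays like a pure exponential e^{−Γ/c} with pre-exponential factor proportional to 1/√Γ. -/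
noncomputable section

open MeasureTheory Filter Set
open scoped RealInnerProductSpace Topology

/-- Gaussian tail integral over `{z : s ≤ z ^ 2}`. -/
def gTail (s : ℝ) : ℝ :=
  ∫ z : ℝ, ({z : ℝ | s ≤ z ^ 2}).indicator (fun z => Real.exp (-(1 / 2) * z ^ 2)) z

lemma measSet_sq (s : ℝ) : MeasurableSet {z : ℝ | s ≤ z ^ 2} :=
  measurableSet_le measurable_const (by fun_prop)

lemma integrable_gauss_half : Integrable (fun z : ℝ => Real.exp (-(1 / 2) * z ^ 2)) :=
  integrable_exp_neg_mul_sq (by norm_num)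

lemma gTail_antitone : Antitone gTail := by
  intro s t hst
  refine integral_mono (integrable_gauss_half.indicator (measSet_sq t))
    (integrable_gauss_half.indicator (measSet_sq s)) ?_
  refine indicator_le_indicator_of_subset ?_ (fun z => (Real.exp_pos _).le)
  intro z hz
  exact le_trans hst hz

lemma gTail_nonneg (s : ℝ) : 0 ≤ gTail s :=
  integral_nonneg (fun z => indicator_nonneg (fun z _ => (Real.exp_pos _).le) z)

lemma gTail_le (s : ℝ) : gTail s ≤ √(Real.pi / (1 / 2)) := by
  rw [← integral_gaussian]
  refine integral_mono (integrable_gauss_half.indicator (measSet_sq s)) integrable_gauss_half ?_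
  exact indicator_le_self' (fun z _ => (Real.exp_pos _).le)

lemma exp_mul_gTail (s : ℝ) (hs : 0 ≤ s) :
    Real.exp (s / 2) * gTail s
      = 2 * ∫ t in Ioi (0:ℝ), Real.exp (-(1 / 2) * t ^ 2 - √s * t) := by
  have h1 : gTail s = 2 * ∫ z in Ioi (0:ℝ),
      ({z : ℝ | s ≤ z ^ 2}).indicator (fun z => Real.exp (-(1 / 2) * z ^ 2)) z := by
    rw [← integral_comp_abs]
    unfold gTail
    congr 1 with z
    simp [indicator, sq_abs]
  have h2 : (∫ z in Ioi (0:ℝ),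
      ({z : ℝ | s ≤ z ^ 2}).indicator (fun z => Real.exp (-(1 / 2) * z ^ 2)) z)
      = ∫ z : ℝ, (Ioi (√s)).indicator (fun z => Real.exp (-(1 / 2) * z ^ 2)) z := by
    rw [← integral_indicator measurableSet_Ioi]
    apply integral_congr_ae
    have hne : ∀ᵐ z : ℝ, z ≠ √s := by
      simp [ae_iff]
    filter_upwards [hne] with z hz
    by_cases hz0 : 0 < z
    · have : s ≤ z ^ 2 ↔ √s < z := by
        rw [← Real.sqrt_le_left hz0.le]
        exact ⟨fun h => lt_of_le_of_ne h (Ne.symm hz), fun h => h.le⟩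
      simp [indicator, hz0, this]
    · have : ¬ (√s < z) := fun h => hz0 (lt_of_le_of_lt (Real.sqrt_nonneg s) h)
      simp [indicator, hz0, this]
  rw [h1, h2, ← integral_add_right_eq_self _ (√s), ← integral_indicator measurableSet_Ioi,
    mul_left_comm, ← integral_const_mul]
  congr 2 with t
  by_cases ht : 0 < t
  · simp only [indicator, mem_Ioi, lt_add_iff_pos_left, ht, if_true]
    rw [← Real.exp_add]
    congr 1
    nlinarith [Real.sq_sqrt hs]
  · simp [indicator, ht]

lemma H_bound (s : ℝ) : Real.exp (s / 2) * gTail s ≤ √(Real.pi / (1 / 2)) := by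
  rcases le_total s 0 with hs | hs
  · calc Real.exp (s / 2) * gTail s ≤ 1 * √(Real.pi / (1 / 2)) := by
          apply mul_le_mul _ (gTail_le s) (gTail_nonneg s) zero_le_one
          exact Real.exp_le_one_iff.mpr (by linarith)
      _ = _ := one_mul _
  · rw [exp_mul_gTail s hs]
    have : (∫ t in Ioi (0:ℝ), Real.exp (-(1 / 2) * t ^ 2 - √s * t))
        ≤ ∫ t in Ioi (0:ℝ), Real.exp (-(1 / 2) * t ^ 2) := by
      apply integral_mono_of_nonneg
      · exact Eventually.of_forall (fun t => (Real.exp_pos _).le)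
      · exact integrable_gauss_half.integrableOn
      · filter_upwards [ae_restrict_mem measurableSet_Ioi] with t ht
        apply Real.exp_le_exp.mpr
        have := mul_nonneg (Real.sqrt_nonneg s) (le_of_lt (mem_Ioi.mp ht))
        linarith
    rw [integral_gaussian_Ioi] at this
    linarith

lemma sqrt_mul_H (s : ℝ) (hs : 0 < s) :
    √s * (Real.exp (s / 2) * gTail s)
      = 2 * ∫ w in Ioi (0:ℝ), Real.exp (-(1 / 2) * (w ^ 2 / s) - w) := by
  have hr : 0 < √s := Real.sqrt_pos.mpr hs
  rw [exp_mul_gTail s hs.le]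
  have := integral_comp_mul_left_Ioi
    (fun w : ℝ => Real.exp (-(1 / 2) * (w ^ 2 / s) - w)) 0 hr
  rw [mul_zero, smul_eq_mul] at this
  have h2 : (∫ t in Ioi (0:ℝ), Real.exp (-(1 / 2) * t ^ 2 - √s * t))
      = ∫ x in Ioi (0:ℝ), Real.exp (-(1 / 2) * ((√s * x) ^ 2 / s) - √s * x) := by
    congr 1 with t
    rw [mul_pow, Real.sq_sqrt hs.le, mul_div_cancel_left₀ _ hs.ne']
  rw [h2, this]
  field_simp

lemma integrable_exp_neg' : IntegrableOn (fun w : ℝ => Real.exp (-w)) (Ioi 0) := by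
  simpa using exp_neg_integrableOn_Ioi 0 (b := 1) one_pos

lemma sqrt_mul_H_le (s : ℝ) (hs : 0 < s) :
    √s * (Real.exp (s / 2) * gTail s) ≤ 2 := by
  rw [sqrt_mul_H s hs]
  have : (∫ w in Ioi (0:ℝ), Real.exp (-(1 / 2) * (w ^ 2 / s) - w))
      ≤ ∫ w in Ioi (0:ℝ), Real.exp (-w) := by
    apply integral_mono_of_nonneg
    · exact Eventually.of_forall (fun t => (Real.exp_pos _).le)
    · exact integrable_exp_neg'
    · refine Eventually.of_forall (fun t => Real.exp_le_exp.mpr ?_)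
      have : 0 ≤ t ^ 2 / s := by positivity
      linarith
  rw [integral_exp_neg_Ioi_zero] at this
  linarith

lemma tendsto_sqrt_mul_H :
    Tendsto (fun s : ℝ => √s * (Real.exp (s / 2) * gTail s)) atTop (𝓝 2) := by
  have key : Tendsto (fun s : ℝ => ∫ w in Ioi (0:ℝ), Real.exp (-(1 / 2) * (w ^ 2 / s) - w))
      atTop (𝓝 (∫ w in Ioi (0:ℝ), Real.exp (-w))) := by
    apply tendsto_integral_filter_of_dominated_convergence (fun w => Real.exp (-w))
    · refine Eventually.of_forall (fun s => ?_)
      apply Continuous.aestronglyMeasurable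
      fun_prop
    · filter_upwards [eventually_gt_atTop 0] with s hs
      refine Eventually.of_forall (fun t => ?_)
      rw [Real.norm_eq_abs, abs_of_pos (Real.exp_pos _)]
      apply Real.exp_le_exp.mpr
      have : 0 ≤ t ^ 2 / s := by positivity
      linarith
    · exact integrable_exp_neg'
    · refine Eventually.of_forall (fun w => ?_)
      have h0 : Tendsto (fun s : ℝ => w ^ 2 / s) atTop (𝓝 0) :=
        tendsto_const_nhds.div_atTop tendsto_id
      have h1 := (Real.continuous_exp.tendsto _).comp ((h0.const_mul (-(1 / 2))).sub_const w)
      simpa [Function.comp_def] using h1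
  rw [integral_exp_neg_Ioi_zero] at key
  have k2 := key.const_mul 2
  rw [mul_one] at k2
  refine k2.congr' ?_
  filter_upwards [eventually_gt_atTop 0] with s hs
  exact (sqrt_mul_H s hs).symm

/-- pointwise bound -/
lemma pt_bound (c q Γ : ℝ) (hc : 0 < c) (hq : 0 ≤ q) (hΓ : 0 < Γ) :
    √Γ * (Real.exp (((2 * Γ - q) / c) / 2) * gTail ((2 * Γ - q) / c))
      ≤ (2 * √c + √(Real.pi / (1 / 2))) * (1 + q) := by
  set s := (2 * Γ - q) / c with hs
  set H := Real.exp (s / 2) * gTail s with hH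
  have hH0 : 0 ≤ H := mul_nonneg (Real.exp_pos _).le (gTail_nonneg s)
  have hcs := Real.sqrt_nonneg c
  have hps := Real.sqrt_nonneg (Real.pi / (1 / 2))
  rcases le_total q Γ with h | h
  · have hs1 : Γ / c ≤ s := by
      rw [hs]; gcongr; linarith
    have hs0 : 0 < s := lt_of_lt_of_le (by positivity) hs1
    have h1 : √Γ ≤ √c * √s := by
      rw [← Real.sqrt_mul hc.le]
      apply Real.sqrt_le_sqrt
      rw [div_le_iff₀ hc] at hs1
      linarith
    have h2 := sqrt_mul_H_le s hs0
    rw [← hH] at h2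
    calc √Γ * H ≤ √c * √s * H := by gcongr
      _ = √c * (√s * H) := by ring
      _ ≤ √c * 2 := by gcongr
      _ ≤ _ := by nlinarith [mul_nonneg hcs hq, mul_nonneg hps hq]
  · have h1 : √Γ ≤ 1 + q := by
      rw [Real.sqrt_le_left (by linarith)]
      nlinarith
    calc √Γ * H ≤ (1 + q) * √(Real.pi / (1 / 2)) :=
          mul_le_mul h1 (H_bound s) hH0 (by linarith)
      _ ≤ _ := by nlinarith [mul_nonneg hcs hq, mul_nonneg hps hq]

lemma pt_lim (c q : ℝ) (hc : 0 < c) :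
    Tendsto (fun Γ : ℝ => √Γ * (Real.exp (((2 * Γ - q) / c) / 2) * gTail ((2 * Γ - q) / c)))
      atTop (𝓝 (√(c / 2) * 2)) := by
  have hs : Tendsto (fun Γ : ℝ => (2 * Γ - q) / c) atTop atTop := by
    apply Tendsto.atTop_div_const hc
    exact tendsto_atTop_add_const_right _ (-q) (tendsto_id.const_mul_atTop two_pos)
  have h1 := tendsto_sqrt_mul_H.comp hs
  have h2 : Tendsto (fun Γ : ℝ => √(c / (2 - q / Γ))) atTop (𝓝 (√(c / 2))) := by
    have h0 : Tendsto (fun Γ : ℝ => q / Γ) atTop (𝓝 0) :=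
      tendsto_const_nhds.div_atTop tendsto_id
    have h3 := (tendsto_const_nhds (x := c)).div (h0.const_sub 2) (by norm_num)
    rw [sub_zero] at h3
    exact (Real.continuous_sqrt.tendsto _).comp h3
  refine (h2.mul h1).congr' ?_
  filter_upwards [eventually_gt_atTop 0, hs.eventually_gt_atTop 0] with Γ hΓ hsΓ
  simp only [Function.comp]
  rw [← mul_assoc, ← Real.sqrt_mul' _ hsΓ.le]
  congr 2
  have : 2 * Γ - q ≠ 0 := by
    intro h; rw [h] at hsΓ; simp at hsΓ
  have h4 : 2 - q / Γ = (2 * Γ - q) / Γ := by field_simp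
  rw [h4]
  field_simp

lemma prob_eq (a b c Γ : ℝ) (hc : 0 < c) :
    ((volume.withDensity (fun u : ℝ × ℝ × ℝ =>
      ENNReal.ofReal ((2 * Real.pi) ^ (-(3:ℝ) / 2) *
        Real.exp (-(u.1 ^ 2 + u.2.1 ^ 2 + u.2.2 ^ 2) / 2))))
      {u : ℝ × ℝ × ℝ | 2 * Γ ≤ a * u.1 ^ 2 + b * u.2.1 ^ 2 + c * u.2.2 ^ 2}).toReal
    = ∫ p : ℝ × ℝ, (2 * Real.pi) ^ (-(3:ℝ) / 2) *
        (Real.exp (-(1 / 2) * p.1 ^ 2) * Real.exp (-(1 / 2) * p.2 ^ 2)) *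
          gTail ((2 * Γ - (a * p.1 ^ 2 + b * p.2 ^ 2)) / c) := by
  set K : ℝ := (2 * Real.pi) ^ (-(3:ℝ) / 2) with hK
  have hK0 : 0 ≤ K := by positivity
  set A := {u : ℝ × ℝ × ℝ | 2 * Γ ≤ a * u.1 ^ 2 + b * u.2.1 ^ 2 + c * u.2.2 ^ 2} with hA
  have hAm : MeasurableSet A := measurableSet_le measurable_const (by fun_prop)
  set D : ℝ × ℝ × ℝ → ℝ :=
    fun u => K * Real.exp (-(u.1 ^ 2 + u.2.1 ^ 2 + u.2.2 ^ 2) / 2) with hD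
  have hDc : Continuous D := by fun_prop
  have e1 : D ∘ MeasurableEquiv.prodAssoc = fun u : (ℝ × ℝ) × ℝ =>
      (K * (Real.exp (-(1 / 2) * u.1.1 ^ 2) * Real.exp (-(1 / 2) * u.1.2 ^ 2))) *
        Real.exp (-(1 / 2) * u.2 ^ 2) := by
    funext u
    simp only [hD, Function.comp, MeasurableEquiv.prodAssoc, MeasurableEquiv.coe_mk,
      Equiv.prodAssoc_apply]
    rw [mul_assoc, ← Real.exp_add, ← Real.exp_add]
    congr 2
    ring
  have hi : Integrable (D ∘ MeasurableEquiv.prodAssoc) (volume : Measure ((ℝ × ℝ) × ℝ)) := by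
    rw [e1]
    exact Integrable.mul_prod (f := fun p : ℝ × ℝ =>
      K * (Real.exp (-(1 / 2) * p.1 ^ 2) * Real.exp (-(1 / 2) * p.2 ^ 2)))
      ((integrable_gauss_half.mul_prod integrable_gauss_half).const_mul K) integrable_gauss_half
  rw [withDensity_apply _ hAm, ← integral_eq_lintegral_of_nonneg_ae
    (Eventually.of_forall (fun u => mul_nonneg hK0 (Real.exp_pos _).le))
    hDc.aestronglyMeasurable, ← integral_indicator hAm,
    ← (volume_preserving_prodAssoc (α₁ := ℝ) (β₁ := ℝ) (γ₁ := ℝ)).integral_comp']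
  have e2 : (fun u : (ℝ × ℝ) × ℝ => A.indicator D (MeasurableEquiv.prodAssoc u))
      = (MeasurableEquiv.prodAssoc ⁻¹' A).indicator (D ∘ MeasurableEquiv.prodAssoc) := by
    funext u
    simp [indicator]
  have hi2 : Integrable (fun u : (ℝ × ℝ) × ℝ => A.indicator D (MeasurableEquiv.prodAssoc u))
      ((volume : Measure (ℝ × ℝ)).prod (volume : Measure ℝ)) := by
    rw [e2]
    exact hi.indicator (MeasurableEquiv.prodAssoc.measurable hAm)
  change ∫ u : (ℝ × ℝ) × ℝ, A.indicator D (MeasurableEquiv.prodAssoc u)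
    ∂((volume : Measure (ℝ × ℝ)).prod (volume : Measure ℝ)) = _
  rw [integral_prod _ hi2]
  congr 1 with p
  rw [gTail, ← integral_const_mul]
  congr 1 with z
  have e3 := congrFun e1 (p, z)
  simp only [Function.comp] at e3
  have hm : MeasurableEquiv.prodAssoc (p, z) ∈ A ↔
      (2 * Γ - (a * p.1 ^ 2 + b * p.2 ^ 2)) / c ≤ z ^ 2 := by
    rw [div_le_iff₀ hc]
    change 2 * Γ ≤ a * p.1 ^ 2 + b * p.2 ^ 2 + c * z ^ 2 ↔ _
    constructor <;> intro h <;> linarith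
  simp only [indicator, hm, mem_setOf_eq, e3]
  split_ifs <;> simp

/-- Let `0 < a < b < c` and let `μ` be the standard Gaussian measure on
`ℝ³` (density `(2π)^{−3/2} e^{−|u|²/2}`).  Then the tail of the quadratic form
`aX₁² + bX₂² + cX₃²` satisfies
`lim_{Γ→∞} √Γ · e^{Γ/c} · μ{aX₁² + bX₂² + cX₃² ≥ 2Γ} = c^{3/2}/√(π(c−a)(c−b))`. -/
theorem statement17
    (a b c : ℝ) (ha : 0 < a) (hab : a < b) (hbc : b < c)
    (μ : Measure (ℝ × ℝ × ℝ))
    (hμ : μ = volume.withDensity (fun u : ℝ × ℝ × ℝ =>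
      ENNReal.ofReal ((2 * Real.pi) ^ (-(3:ℝ) / 2) *
        Real.exp (-(u.1 ^ 2 + u.2.1 ^ 2 + u.2.2 ^ 2) / 2)))) :
    Filter.Tendsto
      (fun Γ : ℝ => Real.sqrt Γ * Real.exp (Γ / c) *
        (μ {u : ℝ × ℝ × ℝ | 2 * Γ ≤ a * u.1 ^ 2 + b * u.2.1 ^ 2 + c * u.2.2 ^ 2}).toReal)
      Filter.atTop
      (𝓝 (c ^ ((3:ℝ) / 2) / Real.sqrt (Real.pi * (c - a) * (c - b)))) := by
  have hc : 0 < c := by linarith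
  subst hμ
  simp_rw [prob_eq a b c _ hc]
  set K : ℝ := (2 * Real.pi) ^ (-(3:ℝ) / 2) with hK
  have hK0 : 0 ≤ K := by positivity
  set α : ℝ := (c - a) / (2 * c) with hα
  set β : ℝ := (c - b) / (2 * c) with hβ
  have hα0 : 0 < α := div_pos (by linarith) (by linarith)
  have hβ0 : 0 < β := div_pos (by linarith) (by linarith)
  set W : ℝ × ℝ → ℝ := fun p => Real.exp (-α * p.1 ^ 2) * Real.exp (-β * p.2 ^ 2) with hW
  have hW0 : ∀ p, 0 ≤ W p := fun p => by positivity
  have key : Tendsto (fun Γ : ℝ => ∫ p : ℝ × ℝ, K * W p *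
      (√Γ * (Real.exp (((2 * Γ - (a * p.1 ^ 2 + b * p.2 ^ 2)) / c) / 2) *
        gTail ((2 * Γ - (a * p.1 ^ 2 + b * p.2 ^ 2)) / c)))) atTop
      (𝓝 (∫ p : ℝ × ℝ, K * W p * (√(c / 2) * 2))) := by
    apply tendsto_integral_filter_of_dominated_convergence (fun p => K * W p *
      ((2 * √c + √(Real.pi / (1 / 2))) * (1 + (a * p.1 ^ 2 + b * p.2 ^ 2))))
    · refine Eventually.of_forall (fun Γ => ?_)
      apply Measurable.aestronglyMeasurable
      have := gTail_antitone.measurable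
      fun_prop
    · filter_upwards [eventually_gt_atTop 0] with Γ hΓ
      refine Eventually.of_forall (fun p => ?_)
      have hb0 : 0 < b := by linarith
      have hn : 0 ≤ √Γ * (Real.exp (((2 * Γ - (a * p.1 ^ 2 + b * p.2 ^ 2)) / c) / 2) *
        gTail ((2 * Γ - (a * p.1 ^ 2 + b * p.2 ^ 2)) / c)) :=
        mul_nonneg (Real.sqrt_nonneg _) (mul_nonneg (Real.exp_pos _).le (gTail_nonneg _))
      have hKW := mul_nonneg hK0 (hW0 p)
      rw [Real.norm_eq_abs, abs_of_nonneg (mul_nonneg hKW hn)]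
      exact mul_le_mul_of_nonneg_left (pt_bound c _ Γ hc (by positivity) hΓ) hKW
    · have g1 := integrable_exp_neg_mul_sq hα0
      have g2 := integrable_exp_neg_mul_sq hβ0
      have g3 : Integrable (fun x : ℝ => x ^ 2 * Real.exp (-α * x ^ 2)) := by
        simpa using integrable_rpow_mul_exp_neg_mul_sq hα0 (s := 2) (by norm_num)
      have g4 : Integrable (fun x : ℝ => x ^ 2 * Real.exp (-β * x ^ 2)) := by
        simpa using integrable_rpow_mul_exp_neg_mul_sq hβ0 (s := 2) (by norm_num)
      have g5 := (((g1.mul_prod g2).add ((g3.mul_prod g2).const_mul a)).add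
        ((g1.mul_prod g4).const_mul b)).const_mul (K * (2 * √c + √(Real.pi / (1 / 2))))
      refine g5.congr (Eventually.of_forall (fun p => ?_))
      simp only [hW, Pi.add_apply]
      ring
    · exact Eventually.of_forall (fun p => (pt_lim c _ hc).const_mul _)
  have hval : (∫ p : ℝ × ℝ, K * W p * (√(c / 2) * 2))
      = c ^ ((3:ℝ) / 2) / √(Real.pi * (c - a) * (c - b)) := by
    rw [integral_mul_const, integral_const_mul]
    have : (∫ p : ℝ × ℝ, W p) = √(Real.pi / α) * √(Real.pi / β) := by
      rw [← integral_gaussian, ← integral_gaussian]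
      exact integral_prod_mul (μ := (volume : Measure ℝ)) (ν := (volume : Measure ℝ))
        (fun x : ℝ => Real.exp (-α * x ^ 2)) (fun y : ℝ => Real.exp (-β * y ^ 2))
    have hpi := Real.pi_pos
    have hca : 0 < c - a := by linarith
    have hcb : 0 < c - b := by linarith
    have hKsq : K ^ 2 = ((2 * Real.pi) ^ 3)⁻¹ := by
      rw [hK, ← Real.rpow_natCast, ← Real.rpow_mul (by positivity), ← Real.rpow_natCast,
        ← Real.rpow_neg (by positivity)]
      norm_num
    have hcsq : (c ^ ((3:ℝ) / 2)) ^ 2 = c ^ 3 := by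
      rw [← Real.rpow_natCast, ← Real.rpow_mul hc.le, ← Real.rpow_natCast]
      norm_num
    rw [this, ← sq_eq_sq₀ (by positivity) (by positivity)]
    rw [div_pow, hcsq, mul_pow, mul_pow, mul_pow, mul_pow, hKsq, Real.sq_sqrt (by positivity),
      Real.sq_sqrt (by positivity), Real.sq_sqrt (by positivity), Real.sq_sqrt (by positivity),
      hα, hβ]
    field_simp
  rw [hval] at key
  refine key.congr (fun Γ => ?_)
  rw [← integral_const_mul]
  congr 1 with p
  have he : W p * Real.exp (((2 * Γ - (a * p.1 ^ 2 + b * p.2 ^ 2)) / c) / 2)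
      = Real.exp (Γ / c) * (Real.exp (-(1 / 2) * p.1 ^ 2) * Real.exp (-(1 / 2) * p.2 ^ 2)) := by
    simp only [hW, ← Real.exp_add]
    congr 1
    rw [hα, hβ]
    field_simp
    ring
  linear_combination (K * √Γ * gTail ((2 * Γ - (a * p.1 ^ 2 + b * p.2 ^ 2)) / c)) * he
end
end
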